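/- arXiv:1808.05460 — 9 statements merged into one kernel-verified Lean document; each statement's English description precedes it below -/
import Mathlib

section
/- Let n ≥ 1 and let A = L ∪ R be an MSTD set of integers that is P_n, with 1 ∈ A, 2n ∈ A, L ⊆ [1,n] and R ⊆ [n+1,2n]. Let m ≥ 0 be an integer, let M ⊆ [n+1, n+m], and set A' = L ∪ M ∪ (R+m). If A' is SP_n (equivalently, A'+A' ⊇ [n+2, 3n+2m]), then A' is MSTD. -/
open Finset Pointwise

/-- A finite set of integers is MSTD (more-sums-than-differences) if `|A+A| > |A-A|`. -/
def MSTD (A : Finset ℤ) : Prop := (A - A).card < (A + A).card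

/-!
Replacing the middle of `A ⊆ [a, b]` by one that is `m` longer affects only the middle of the sumset
and of the difference set. Indeed a sum below `2a + n` uses only the lower fringe, of length `n`, a
sum above `2b - n` only the upper fringe, and a difference of absolute value above `b - a - n` is
taken between the two fringes; so extreme sums and differences are merely translated. A middle
interval that is completely filled has the most elements possible, and it grows by `2m`. Hence, if
the middle of `A' + A'` is full, `|A' + A'| ≥ |A + A| + 2m`; if the middle of `A - A` is full, the
same estimate with the roles of `A` and `A'` exchanged gives `|A - A| ≥ |A' - A'| - 2m`.
-/

theorem card_filter_lt_add_card_filter_Icc_add_card_filter_gt {α : Type*} [LinearOrder α]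
    [LocallyFiniteOrder α] (X : Finset α) {a b : α} (hab : ∀ x, b < x → a ≤ x) :
    #{x ∈ X | x < a} + #{x ∈ X | x ∈ Icc a b} + #{x ∈ X | b < x} = #X := by
  simp only [card_filter, card_eq_sum_ones X, ← sum_add_distrib, mem_Icc]
  refine sum_congr rfl fun x _ ↦ ?_
  have := hab x
  grind

theorem card_add_sub_le_card_of_Icc_subset {X Y : Finset ℤ} {a b s t : ℤ} (hab : a ≤ b + 1)
    (hab' : a + s ≤ b + t + 1) (hmid : Icc (a + s) (b + t) ⊆ Y)
    (hlow : ∀ x ∈ X, x < a → x + s ∈ Y) (hhigh : ∀ x ∈ X, b < x → x + t ∈ Y) :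
    (#X : ℤ) + (t - s) ≤ #Y := by
  have hX := card_filter_lt_add_card_filter_Icc_add_card_filter_gt X (a := a) (b := b)
    fun x hx ↦ by lia
  have hY := card_filter_lt_add_card_filter_Icc_add_card_filter_gt Y (a := a + s) (b := b + t)
    fun y hy ↦ by lia
  have low_le : #{x ∈ X | x < a} ≤ #{y ∈ Y | y < a + s} :=
    card_le_card_of_injOn (· + s) (fun x hx ↦ by simp_all) (add_left_injective s).injOn
  have high_le : #{x ∈ X | b < x} ≤ #{y ∈ Y | b + t < y} :=
    card_le_card_of_injOn (· + t) (fun x hx ↦ by simp_all) (add_left_injective t).injOn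
  have midX_le : #{x ∈ X | x ∈ Icc a b} ≤ #(Icc a b) :=
    card_le_card fun x hx ↦ (mem_filter.1 hx).2
  have le_midY : #(Icc (a + s) (b + t)) ≤ #{y ∈ Y | y ∈ Icc (a + s) (b + t)} :=
    card_le_card fun y hy ↦ mem_filter.2 ⟨hmid hy, hy⟩
  rw [Int.card_Icc] at midX_le le_midY
  lia

/-- The fringes of length `n` of a set `A ⊆ [a, b]` occur in `B`, the lower one in place and the
upper one translated by `m`. This compares `A` with a set whose middle is `m` longer; as no converse
is required of `B`, equality of fringes is expressed by two embeddings, with shifts `m` and `-m`. -/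
structure FringesEmbed (n a b m : ℤ) (A B : Finset ℤ) : Prop where
  subset_Icc : A ⊆ Icc a b
  mem_of_lt : ∀ x ∈ A, x < a + n → x ∈ B
  add_mem_of_gt : ∀ x ∈ A, b - n < x → x + m ∈ B

namespace FringesEmbed

variable {n a b m : ℤ} {A B : Finset ℤ}

theorem card_add_self_le (h : FringesEmbed n a b m A B) (hb : n ≤ b - a) (hbm : n ≤ b + m - a)
    (hB : Icc (2 * a + n) (2 * (b + m) - n) ⊆ B + B) :
    (#(A + A) : ℤ) + 2 * m ≤ #(B + B) := by
  have bounds (x) (hx : x ∈ A) : a ≤ x ∧ x ≤ b := mem_Icc.1 (h.subset_Icc hx)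
  have low : ∀ z ∈ A + A, z < 2 * a + n → z + 0 ∈ B + B := by
    simp only [mem_add, add_zero]
    rintro _ ⟨x, hx, y, hy, rfl⟩ hxy
    have hx' := bounds x hx
    have hy' := bounds y hy
    exact ⟨x, h.mem_of_lt x hx (by lia), y, h.mem_of_lt y hy (by lia), rfl⟩
  have high : ∀ z ∈ A + A, 2 * b - n < z → z + 2 * m ∈ B + B := by
    simp only [mem_add]
    rintro _ ⟨x, hx, y, hy, rfl⟩ hxy
    have hx' := bounds x hx
    have hy' := bounds y hy
    exact ⟨x + m, h.add_mem_of_gt x hx (by lia), y + m, h.add_mem_of_gt y hy (by lia), by ring⟩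
  have mid : Icc (2 * a + n + 0) (2 * b - n + 2 * m) ⊆ B + B := by
    convert hB using 2 <;> ring
  simpa only [sub_zero] using
    card_add_sub_le_card_of_Icc_subset (by lia) (by lia) mid low high

theorem card_sub_self_le (h : FringesEmbed n a b m A B) (hb : n ≤ b - a) (hbm : n ≤ b + m - a)
    (hB : Icc (a - (b + m) + n) (b + m - a - n) ⊆ B - B) :
    (#(A - A) : ℤ) + 2 * m ≤ #(B - B) := by
  have bounds (x) (hx : x ∈ A) : a ≤ x ∧ x ≤ b := mem_Icc.1 (h.subset_Icc hx)
  have low : ∀ z ∈ A - A, z < a - b + n → z + -m ∈ B - B := by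
    simp only [mem_sub]
    rintro _ ⟨x, hx, y, hy, rfl⟩ hxy
    have hx' := bounds x hx
    have hy' := bounds y hy
    exact ⟨x, h.mem_of_lt x hx (by lia), y + m, h.add_mem_of_gt y hy (by lia), by ring⟩
  have high : ∀ z ∈ A - A, b - a - n < z → z + m ∈ B - B := by
    simp only [mem_sub]
    rintro _ ⟨x, hx, y, hy, rfl⟩ hxy
    have hx' := bounds x hx
    have hy' := bounds y hy
    exact ⟨x + m, h.add_mem_of_gt x hx (by lia), y, h.mem_of_lt y hy (by lia), by ring⟩
  have mid : Icc (a - b + n + -m) (b - a - n + m) ⊆ B - B := by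
    convert hB using 2 <;> ring
  have := card_add_sub_le_card_of_Icc_subset (by lia) (by lia) mid low high
  lia

theorem union_union {L C R : Finset ℤ} (hn : 0 ≤ n) (hab : 2 * n ≤ b - a + 1)
    (hL : L ⊆ Icc a (a + n - 1)) (hC : C ⊆ Icc (a + n) (b - n)) (hR : R ⊆ Icc (b - n + 1) b)
    (hLB : L ⊆ B) (hRB : R.image (· + m) ⊆ B) : FringesEmbed n a b m (L ∪ C ∪ R) B where
  subset_Icc := union_subset (union_subset (hL.trans (Icc_subset_Icc le_rfl (by lia)))
    (hC.trans (Icc_subset_Icc (by lia) (by lia)))) (hR.trans (Icc_subset_Icc (by lia) le_rfl))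
  mem_of_lt x hx hxa := by
    obtain (hxL | hxC) | hxR := by simpa only [mem_union] using hx
    · exact hLB hxL
    · have := mem_Icc.1 (hC hxC)
      lia
    · have := mem_Icc.1 (hR hxR)
      lia
  add_mem_of_gt x hx hxb := by
    obtain (hxL | hxC) | hxR := by simpa only [mem_union] using hx
    · have := mem_Icc.1 (hL hxL)
      lia
    · have := mem_Icc.1 (hC hxC)
      lia
    · exact hRB (mem_image_of_mem _ hxR)

end FringesEmbed

theorem MSTD.of_fringesEmbed {n a b m : ℤ} {A B : Finset ℤ} (hA : MSTD A)
    (hAB : FringesEmbed n a b m A B) (hBA : FringesEmbed n a (b + m) (-m) B A)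
    (hb : n ≤ b - a) (hbm : n ≤ b + m - a)
    (hdiff : Icc (a - b + n) (b - a - n) ⊆ A - A)
    (hsum : Icc (2 * a + n) (2 * (b + m) - n) ⊆ B + B) : MSTD B := by
  have sums_le := hAB.card_add_self_le hb hbm hsum
  have diffs_le := hBA.card_sub_self_le hbm (by lia) (by simpa only [add_neg_cancel_right])
  unfold MSTD at hA ⊢
  lia

theorem stmt0_general {n a b m : ℤ} {L C M R : Finset ℤ} (hn : 1 ≤ n)
    (hab : 2 * n ≤ b - a + 1) (habm : 2 * n ≤ b + m - a + 1)
    (hL : L ⊆ Icc a (a + n - 1)) (hR : R ⊆ Icc (b - n + 1) b)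
    (hC : C ⊆ Icc (a + n) (b - n)) (hM : M ⊆ Icc (a + n) (b + m - n))
    (hMSTD : MSTD (L ∪ C ∪ R))
    (hdiff : Icc (a - b + n) (b - a - n) ⊆ (L ∪ C ∪ R) - (L ∪ C ∪ R))
    (hsum : Icc (2 * a + n) (2 * (b + m) - n) ⊆
      (L ∪ M ∪ R.image (· + m)) + (L ∪ M ∪ R.image (· + m))) :
    MSTD (L ∪ M ∪ R.image (· + m)) := by
  have hRm : R.image (· + m) ⊆ Icc (b + m - n + 1) (b + m) := by
    convert image_subset_image hR using 1
    rw [image_add_right_Icc]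
    congr 1
    ring
  have hRm_neg : (R.image (· + m)).image (· + -m) = R := by
    simp only [image_image, Function.comp_def, add_neg_cancel_right, image_id']
  exact hMSTD.of_fringesEmbed
    (.union_union (by lia) hab hL hC hR (subset_union_left.trans subset_union_left)
      subset_union_right)
    (.union_union (by lia) habm hL hM hRm (subset_union_left.trans subset_union_left)
      (hRm_neg.trans_subset subset_union_right))
    (by lia) (by lia) hdiff hsum

theorem stmt0 (n : ℤ) (hn : 1 ≤ n) (L R : Finset ℤ)
    (hL : L ⊆ Finset.Icc 1 n) (hR : R ⊆ Finset.Icc (n + 1) (2 * n))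
    (h1 : (1 : ℤ) ∈ L ∪ R) (h2 : 2 * n ∈ L ∪ R)
    (hMSTD : MSTD (L ∪ R))
    (hPsum : Finset.Icc (n + 2) (3 * n) ⊆ (L ∪ R) + (L ∪ R))
    (hPdiff : Finset.Icc (1 - n) (n - 1) ⊆ (L ∪ R) - (L ∪ R))
    (m : ℤ) (hm : 0 ≤ m) (M : Finset ℤ) (hM : M ⊆ Finset.Icc (n + 1) (n + m))
    (A' : Finset ℤ) (hA' : A' = L ∪ M ∪ R.image (· + m))
    (hSP : Finset.Icc (n + 2) (3 * n + 2 * m) ⊆ A' + A') :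
    MSTD A' := by
  subst hA'
  apply stmt0_general (a := 1) (b := 2 * n) (C := ∅) hn <;> grind [union_empty]
end

section
/- Let n ≥ 5 and let A = L ∪ R be an MSTD set of integers that is P_{n−4}, with 5 ∈ A, 2n−4 ∈ A, L ⊆ [5,n] and R ⊆ [n+1,2n−4]. Let m ≥ 0 be an integer, let M ⊆ [n+1, n+m], and set A' = L ∪ M ∪ (R+m). If A' is SP_{n−4} (equivalently, A'+A' ⊇ [n+6, 3n+2m−4]), then A' is MSTD. -/
open Finset Pointwise

/-!
Cut `A` in the middle and insert a gap of length `m`, filled arbitrarily, to get `A'`. Up to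
translation this does not affect the extreme sums and differences: an extreme sum uses two elements
on the same side of the cut, an extreme difference one element on each side. As `A' + A'` is full in
the middle, it has at least `2 * m` more elements than `A + A`; as `A - A` is full in the middle,
`A' - A'` has at most `2 * m` more elements than `A - A`.
-/

/-- The lengthening operation `A = L ∪ R ↦ A' = L ∪ M ∪ (R + m)`, as a relation between `A` and
`A'`: the part of `A` up to `c` is kept and the part beyond `c` is translated by `m`. The gap
`(c, c + m]` of `A'` is unconstrained, which leaves `M` arbitrary. -/
structure IsMiddleInsertion (c m : ℤ) (A A' : Finset ℤ) : Prop where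
  mem_iff_of_le {x : ℤ} : x ≤ c → (x ∈ A' ↔ x ∈ A)
  add_mem_iff_of_lt {x : ℤ} : c < x → (x + m ∈ A' ↔ x ∈ A)

section Counting

variable {S T : Finset ℤ} {a b p q : ℤ}

lemma card_sdiff_Icc_le_card_sdiff_Icc_of_shift (h : a ≤ b + 1)
    (hlo : ∀ x ∈ T, x < a - p → x + p ∈ S) (hhi : ∀ x ∈ T, b - q < x → x + q ∈ S) :
    #(T \ Icc (a - p) (b - q)) ≤ #(S \ Icc a b) := by
  refine card_le_card_of_injOn (fun x ↦ if x < a - p then x + p else x + q) ?_ ?_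
  · intro x hx
    obtain ⟨hxT, hx⟩ := mem_sdiff.1 hx
    rw [mem_Icc] at hx
    simp only [coe_sdiff, Set.mem_sdiff, mem_coe, mem_Icc]
    split_ifs with hlt
    · exact ⟨hlo x hxT hlt, by lia⟩
    · exact ⟨hhi x hxT (by lia), by lia⟩
  · intro x hx y hy hxy
    have hx := (mem_sdiff.1 hx).2
    have hy := (mem_sdiff.1 hy).2
    rw [mem_Icc] at hx hy
    grind

lemma card_add_sub_le_card_of_Icc_subset_s1 (h : a ≤ b + 1) (h' : a - p ≤ b - q + 1)
    (hS : Icc a b ⊆ S)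
    (hlo : ∀ x ∈ T, x < a - p → x + p ∈ S) (hhi : ∀ x ∈ T, b - q < x → x + q ∈ S) :
    (#T : ℤ) + (q - p) ≤ #S := by
  have hout := card_sdiff_Icc_le_card_sdiff_Icc_of_shift h hlo hhi
  have hT : #T ≤ #(T \ Icc (a - p) (b - q)) + #(Icc (a - p) (b - q)) :=
    card_le_card_sdiff_add_card
  have hS' : #(S \ Icc a b) + #(Icc a b) = #S := card_sdiff_add_card_eq_card hS
  rw [Int.card_Icc] at hT hS'
  lia

end Counting

namespace IsMiddleInsertion

variable {a b c d m : ℤ} {A A' : Finset ℤ}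

lemma of_union {L M R : Finset ℤ} (hm : 0 ≤ m) (hL : ∀ x ∈ L, x ≤ c)
    (hM : ∀ x ∈ M, c < x ∧ x ≤ c + m) (hR : ∀ x ∈ R, c < x) :
    IsMiddleInsertion c m (L ∪ R) (L ∪ M ∪ R.image (· + m)) where
  mem_iff_of_le {x} hx := by
    have hxM : x ∉ M := fun h ↦ by have := hM x h; lia
    have hxR : x ∉ R := fun h ↦ by have := hR x h; lia
    have hxmR : x + -m ∉ R := fun h ↦ by have := hR _ h; lia
    simp [hxM, hxR, hxmR]
  add_mem_iff_of_lt {x} hx := by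
    have hxL : x ∉ L := fun h ↦ by have := hL x h; lia
    have hxmL : x + m ∉ L := fun h ↦ by have := hL _ h; lia
    have hxM : x + m ∉ M := fun h ↦ by have := hM _ h; lia
    simp [hxL, hxmL, hxM]

lemma sub_mem_of_lt (h : IsMiddleInsertion c m A A') {x : ℤ} (hx : x ∈ A') (hcx : c + m < x) :
    x - m ∈ A :=
  (h.add_mem_iff_of_lt (by lia)).1 (by rwa [sub_add_cancel])

lemma subset_Icc (h : IsMiddleInsertion c m A A') (hac : a ≤ c) (hcb : c ≤ b) (hm : 0 ≤ m)
    (hA : A ⊆ Icc a b) : A' ⊆ Icc a (b + m) := by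
  intro x hx
  rw [mem_Icc]
  rcases le_or_gt x c with hxc | hcx
  · have := mem_Icc.1 (hA ((h.mem_iff_of_le hxc).1 hx))
    lia
  rcases le_or_gt x (c + m) with hxcm | hcmx
  · lia
  · have := mem_Icc.1 (hA (h.sub_mem_of_lt hx hcmx))
    lia

lemma card_add_self_add_two_mul_le (h : IsMiddleInsertion c m A A') (hab : a ≤ b) (hm : 0 ≤ m)
    (hA : A ⊆ Icc a b) (hsum : Icc (a + c + 1) (b + c + 2 * m) ⊆ A' + A') :
    (#(A + A) : ℤ) + 2 * m ≤ #(A' + A') := by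
  suffices (#(A + A) : ℤ) + (2 * m - 0) ≤ #(A' + A') by lia
  refine card_add_sub_le_card_of_Icc_subset_s1 (by lia) (by lia) hsum ?_ ?_
  · intro z hz hlt
    obtain ⟨x, hx, y, hy, rfl⟩ := mem_add.1 hz
    have hxab := mem_Icc.1 (hA hx)
    have hyab := mem_Icc.1 (hA hy)
    rw [add_zero]
    exact add_mem_add ((h.mem_iff_of_le (by lia)).2 hx) ((h.mem_iff_of_le (by lia)).2 hy)
  · intro z hz hlt
    obtain ⟨x, hx, y, hy, rfl⟩ := mem_add.1 hz
    have hxab := mem_Icc.1 (hA hx)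
    have hyab := mem_Icc.1 (hA hy)
    rw [two_mul, add_add_add_comm]
    exact add_mem_add ((h.add_mem_iff_of_lt (by lia)).2 hx) ((h.add_mem_iff_of_lt (by lia)).2 hy)

lemma card_sub_self_le_add_two_mul (h : IsMiddleInsertion c m A A') (hac : a ≤ c) (hcb : c ≤ b)
    (hm : 0 ≤ m) (hA : A ⊆ Icc a b) (had : c - a ≤ d) (hbd : b - c - 1 ≤ d)
    (hdiff : Icc (-d) d ⊆ A - A) :
    (#(A' - A') : ℤ) ≤ #(A - A) + 2 * m := by
  have hA' := h.subset_Icc hac hcb hm hA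
  suffices (#(A' - A') : ℤ) + (-m - m) ≤ #(A - A) by lia
  refine card_add_sub_le_card_of_Icc_subset_s1 (by lia) (by lia) hdiff ?_ ?_
  · intro z hz hlt
    obtain ⟨x, hx, y, hy, rfl⟩ := mem_sub.1 hz
    have hxab := mem_Icc.1 (hA' hx)
    have hyab := mem_Icc.1 (hA' hy)
    rw [sub_add]
    exact sub_mem_sub ((h.mem_iff_of_le (by lia)).1 hx) (h.sub_mem_of_lt hy (by lia))
  · intro z hz hlt
    obtain ⟨x, hx, y, hy, rfl⟩ := mem_sub.1 hz
    have hxab := mem_Icc.1 (hA' hx)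
    have hyab := mem_Icc.1 (hA' hy)
    rw [← sub_eq_add_neg, sub_right_comm]
    exact sub_mem_sub (h.sub_mem_of_lt hx (by lia)) ((h.mem_iff_of_le (by lia)).1 hy)

end IsMiddleInsertion

theorem stmt1_general {a b c d m : ℤ} (hac : a ≤ c) (hcb : c ≤ b) (hm : 0 ≤ m)
    {L M R : Finset ℤ} (hL : L ⊆ Icc a c) (hM : M ⊆ Icc (c + 1) (c + m)) (hR : R ⊆ Icc (c + 1) b)
    (hMSTD : MSTD (L ∪ R)) (had : c - a ≤ d) (hbd : b - c - 1 ≤ d)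
    (hdiff : Icc (-d) d ⊆ (L ∪ R) - (L ∪ R))
    (hsum : Icc (a + c + 1) (b + c + 2 * m) ⊆
      (L ∪ M ∪ R.image (· + m)) + (L ∪ M ∪ R.image (· + m))) :
    MSTD (L ∪ M ∪ R.image (· + m)) := by
  have hins : IsMiddleInsertion c m (L ∪ R) (L ∪ M ∪ R.image (· + m)) :=
    .of_union hm (fun _ hx ↦ (mem_Icc.1 (hL hx)).2) (fun _ hx ↦ mem_Icc.1 (hM hx))
      (fun _ hx ↦ (mem_Icc.1 (hR hx)).1)
  have hA : L ∪ R ⊆ Icc a b :=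
    union_subset (hL.trans (Icc_subset_Icc_right hcb)) (hR.trans (Icc_subset_Icc_left (by lia)))
  have hcard_sum := hins.card_add_self_add_two_mul_le (hac.trans hcb) hm hA hsum
  have hcard_diff := hins.card_sub_self_le_add_two_mul hac hcb hm hA had hbd hdiff
  unfold MSTD at hMSTD ⊢
  lia

theorem stmt1 (n : ℤ) (hn : 5 ≤ n) (L R : Finset ℤ)
    (hL : L ⊆ Finset.Icc 5 n) (hR : R ⊆ Finset.Icc (n + 1) (2 * n - 4))
    (h1 : (5 : ℤ) ∈ L ∪ R) (h2 : 2 * n - 4 ∈ L ∪ R)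
    (hMSTD : MSTD (L ∪ R))
    (hPsum : Finset.Icc (n + 6) (3 * n - 4) ⊆ (L ∪ R) + (L ∪ R))
    (hPdiff : Finset.Icc (5 - n) (n - 5) ⊆ (L ∪ R) - (L ∪ R))
    (m : ℤ) (hm : 0 ≤ m) (M : Finset ℤ) (hM : M ⊆ Finset.Icc (n + 1) (n + m))
    (A' : Finset ℤ) (hA' : A' = L ∪ M ∪ R.image (· + m))
    (hSP : Finset.Icc (n + 6) (3 * n + 2 * m - 4) ⊆ A' + A') :
    MSTD A' := by
  subst hA'
  exact stmt1_general hn (by lia) hm hL hM hR hMSTD le_rfl (by lia) (by rwa [neg_sub])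
    (by convert hSP using 2 <;> ring)
end

section
/- Let S be a nonempty finite set of integers with |S+S| − |S−S| ≥ 10|S| (a 10-strong MSTD set). If a_1 < a_2 < a_3 < a_4 are integers with a_1 > max S, then S ∪ {a_1, a_2, a_3, a_4} is MSTD. Similarly, if b_1 < b_2 < b_3 < b_4 are integers with b_4 < min S, then S ∪ {b_1, b_2, b_3, b_4} is MSTD. -/
/-!
Adjoining a set `T` to `S` loses no sums, and creates at most `2|S||T| + |T|²` new differences:
those in `S - T`, `T - S` and `T - T`. For `|T| = 4` this is `8|S| + 16`, which is less than the
surplus `10|S|` as soon as `|S| > 8`. But the surplus itself makes `S` large: from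
`10|S| ≤ |S + S| ≤ |S|²` we get `|S| ≥ 10`.
-/

open Finset Pointwise

section

variable {G : Type*} [DecidableEq G]

theorem card_union_sub_union_le [Sub G] (S T : Finset G) :
    #((S ∪ T) - (S ∪ T)) ≤ #(S - S) + (2 * #S * #T + #T ^ 2) :=
  calc #((S ∪ T) - (S ∪ T))
      = #(((S - S) ∪ (S - T)) ∪ ((T - S) ∪ (T - T))) := by
        rw [union_sub, sub_union, sub_union]
    _ ≤ (#(S - S) + #(S - T)) + (#(T - S) + #(T - T)) :=
        (card_union_le _ _).trans (add_le_add (card_union_le _ _) (card_union_le _ _))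
    _ ≤ (#(S - S) + #S * #T) + (#T * #S + #T * #T) := by gcongr <;> exact card_sub_le
    _ = #(S - S) + (2 * #S * #T + #T ^ 2) := by ring

theorem le_card_of_mul_card_le_card_add_self [Add G] {S : Finset G} {c : ℕ} (hS : S.Nonempty)
    (h : c * #S ≤ #(S + S)) : c ≤ #S :=
  le_of_mul_le_mul_right (h.trans card_add_le) hS.card_pos

/-- The condition on `c` and `#T` says that `c * #S` exceeds the bound `2 * #S * #T + #T ^ 2` on
the number of new differences when `#S = c`, the smallest size the surplus allows. -/
theorem stmt5_general [Add G] [Sub G] {S T : Finset G} {c : ℕ} (hS : S.Nonempty)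
    (hstrong : #(S - S) + c * #S ≤ #(S + S)) (hT : 2 * c * #T + #T ^ 2 < c ^ 2) :
    #((S ∪ T) - (S ∪ T)) < #((S ∪ T) + (S ∪ T)) := by
  have hc : c ≤ #S := le_card_of_mul_card_le_card_add_self hS (le_of_add_le_right hstrong)
  have hTc : 2 * #T < c := by nlinarith
  have hnew : 2 * #S * #T + #T ^ 2 < c * #S := by nlinarith
  calc #((S ∪ T) - (S ∪ T))
      ≤ #(S - S) + (2 * #S * #T + #T ^ 2) := card_union_sub_union_le S T
    _ < #(S - S) + c * #S := by gcongr
    _ ≤ #(S + S) := hstrong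
    _ ≤ #((S ∪ T) + (S ∪ T)) := by gcongr <;> exact subset_union_left

end

theorem stmt5 (S : Finset ℤ) (hS : S.Nonempty)
    (hstrong : (S - S).card + 10 * S.card ≤ (S + S).card) :
    (∀ a₁ a₂ a₃ a₄ : ℤ, a₁ < a₂ → a₂ < a₃ → a₃ < a₄ → S.max' hS < a₁ →
      MSTD (S ∪ {a₁, a₂, a₃, a₄})) ∧
    (∀ b₁ b₂ b₃ b₄ : ℤ, b₁ < b₂ → b₂ < b₃ → b₃ < b₄ → b₄ < S.min' hS →
      MSTD (S ∪ {b₁, b₂, b₃, b₄})) := by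
  have mstd_union (T : Finset ℤ) (hT : #T ≤ 4) : MSTD (S ∪ T) :=
    stmt5_general hS hstrong (by nlinarith)
  exact ⟨fun _ _ _ _ _ _ _ _ => mstd_union _ card_le_four,
    fun _ _ _ _ _ _ _ _ => mstd_union _ card_le_four⟩
end

section
/- There exists a nonempty finite set S of integers such that |S+S| − |S−S| ≥ 10|S|. -/
open Finset Pointwise

/-!
Addition and subtraction on `A ^ k` act coordinatewise, so the sizes of `A ^ k + A ^ k` and
`A ^ k - A ^ k` are `k`-th powers, and a single set with `#(A - A) < #(A + A)` makes the ratio of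
the two as large as desired. A generic linear form is injective on any finite set of vectors and
hence carries `A ^ k` into `ℤ` without changing any of the cardinalities involved.
-/

open scoped Polynomial

section InfiniteDomain

variable {R : Type*} [CommRing R] [IsDomain R] [Infinite R]

lemma exists_injOn_eval (P : Finset R[X]) : ∃ b : R, Set.InjOn (Polynomial.eval b) P := by
  have hprod : ∏ pq ∈ P.offDiag, (pq.1 - pq.2) ≠ 0 :=
    prod_ne_zero_iff.2 fun _ hpq ↦ sub_ne_zero.2 (mem_offDiag.1 hpq).2.2
  obtain ⟨b, hb⟩ := not_forall.1 (mt (Polynomial.zero_of_eval_zero _) hprod)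
  rw [Polynomial.eval_prod, ← ne_eq, prod_ne_zero_iff] at hb
  refine ⟨b, fun p hp q hq heval ↦ ?_⟩
  by_contra hpq
  exact hb (p, q) (mem_offDiag.2 ⟨hp, hq, hpq⟩) (by rw [Polynomial.eval_sub, heval, sub_self])

lemma exists_linearMap_injOn {k : ℕ} (T : Finset (Fin k → R)) :
    ∃ φ : (Fin k → R) →ₗ[R] R, Set.InjOn φ T := by
  classical
  obtain ⟨b, hb⟩ := exists_injOn_eval (T.image (Polynomial.ofFn k))
  rw [coe_image] at hb
  exact ⟨Polynomial.leval b ∘ₗ Polynomial.ofFn k,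
    hb.comp (Polynomial.injective_ofFn k).injOn (Set.mapsTo_image _ _)⟩

lemma exists_card_add_card_sub_eq_pow [DecidableEq R] (A : Finset R) (k : ℕ) :
    ∃ S : Finset R, #S = #A ^ k ∧ #(S + S) = #(A + A) ^ k ∧ #(S - S) = #(A - A) ^ k := by
  let P : Finset (Fin k → R) := Fintype.piFinset fun _ ↦ A
  obtain ⟨φ, hφ⟩ := exists_linearMap_injOn (P ∪ (P + P) ∪ (P - P))
  have card_image {T : Finset (Fin k → R)} (hT : T ⊆ P ∪ (P + P) ∪ (P - P)) : #(T.image φ) = #T :=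
    card_image_of_injOn (hφ.mono (coe_subset.2 hT))
  have image_sub : (P - P).image φ = P.image φ - P.image φ := image_image₂_distrib (map_sub φ)
  refine ⟨P.image φ, ?_, ?_, ?_⟩
  · rw [card_image (by grind), Fintype.card_piFinset_const]
  · rw [← image_add, card_image (by grind), ← Fintype.piFinset_add, Fintype.card_piFinset_const]
  · rw [← image_sub, card_image (by grind), ← Fintype.piFinset_sub, Fintype.card_piFinset_const]

end InfiniteDomain

lemma exists_mul_pow_le_pow {m n : ℕ} (hmn : m < n) (c : ℕ) : ∃ k : ℕ, c * m ^ k ≤ n ^ k := by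
  -- By Bernoulli `k * m ^ (k - 1) ≤ (m + 1) ^ k`, which gives the claim as soon as `c * m ≤ k`;
  -- the extra `1` makes `k` positive, since `k = 0` fails for `m = 0`, `1 < c`.
  refine ⟨c * m + 1, ?_⟩
  calc c * m ^ (c * m + 1)
      = c * m * m ^ (c * m) := by ring
    _ ≤ m ^ (c * m + 1) + (c * m + 1 : ℕ) * m ^ (c * m) * 1 := by
      rw [mul_one, add_one_mul]
      omega
    _ ≤ (m + 1) ^ (c * m + 1) := pow_add_mul_le_add_pow m.zero_le (Nat.zero_le _) _
    _ ≤ n ^ (c * m + 1) := by gcongr; exact hmn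

lemma exists_mul_card_sub_le_card_add {R : Type*} [CommRing R] [IsDomain R] [Infinite R]
    [DecidableEq R] {A : Finset R} (hA : #(A - A) < #(A + A)) (c : ℕ) :
    ∃ S : Finset R, S.Nonempty ∧ c * #(S - S) ≤ #(S + S) := by
  have hA₀ : A.Nonempty := (add_nonempty.1 (card_pos.1 (Nat.zero_lt_of_lt hA))).1
  obtain ⟨k, hk⟩ := exists_mul_pow_le_pow hA c
  obtain ⟨S, hS, hadd, hsub⟩ := exists_card_add_card_sub_eq_pow A k
  refine ⟨S, card_pos.1 (hS ▸ pow_pos hA₀.card_pos k), ?_⟩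
  rwa [hadd, hsub]

/-- Conway's set, the standard example of a set with more sums (26) than differences (25). -/
def conwaySet : Finset ℤ := {0, 2, 3, 4, 7, 11, 12, 14}

lemma card_conwaySet_sub_lt_card_add : #(conwaySet - conwaySet) < #(conwaySet + conwaySet) := by
  decide +kernel

theorem stmt6_general (c : ℕ) : ∃ S : Finset ℤ, S.Nonempty ∧ c * #(S - S) ≤ #(S + S) :=
  exists_mul_card_sub_le_card_add card_conwaySet_sub_lt_card_add c

theorem stmt6 : ∃ S : Finset ℤ, S.Nonempty ∧
    (S - S).card + 10 * S.card ≤ (S + S).card := by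
  obtain ⟨S, hS, hcard⟩ := stmt6_general 11
  exact ⟨S, hS, by linarith [card_le_card_sub_self (s := S)]⟩
end

section
/- For every even integer k ≥ 2 and every integer r ≥ 10k, the interval [1,r] can be partitioned into exactly k pairwise disjoint MSTD subsets whose union is [1,r]. -/
/-!
The interval `[1, n]` splits into *two* MSTD sets as soon as `n ≥ 20`. For `k = 2 * m` and
`r ≥ 20 * m`, cut `[1, r]` into `m - 1` blocks of length `20` and one block of length at least `20`,
and split each block in two.

To split `[1, n]`, prescribe `C` near the two ends so that `C - C ⊆ [-(n - 4), n - 4]` misses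
`±(n - 11)`, while `C + C` contains all of `[2, 2 * n - 6]` except possibly `n + 1`. Then
`|C - C| ≤ 2 * n - 9 < 2 * n - 8 ≤ |C + C|`. The two ends are chosen so that `x ↦ n + 1 - x` maps
the pattern at one end to the complement of the pattern at the other. In between, all that matters
is that `C` contains one of any two consecutive integers, so when `C` alternates there, the
reflected complement of `C` has the same shape as `C`. The cases `n = 20` and `n = 21` are computed.
-/

open Finset Pointwise

instance : DecidablePred MSTD := fun A => Nat.decLt (A - A).card (A + A).card

lemma mem_vadd_neg_iff {G : Type*} [AddCommGroup G] [DecidableEq G] {s : Finset G} {c x : G} :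
    x ∈ c +ᵥ -s ↔ c - x ∈ s := by
  rw [← neg_vadd_mem_iff, mem_neg', vadd_eq_add, neg_add, neg_neg, sub_eq_add_neg]

lemma Icc_subset_add_of_mem_or_succ_mem {C D : Finset ℤ} {p a b : ℤ} (hp : p ∈ C)
    (hp' : p + 1 ∈ C) (hD : ∀ x ∈ Icc a b, x ∈ D ∨ x + 1 ∈ D) :
    Icc (p + 1 + a) (p + 1 + b) ⊆ C + D := by
  intro s hs
  obtain h | h := hD (s - (p + 1)) (by rw [mem_Icc] at hs ⊢; omega)
  · exact mem_add.2 ⟨p + 1, hp', _, h, by ring⟩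
  · exact mem_add.2 ⟨p, hp, _, h, by ring⟩

section Symmetry

variable {A : Finset ℤ}

lemma mstd_vadd_iff {c : ℤ} : MSTD (c +ᵥ A) ↔ MSTD A := by
  have h_sub : (c +ᵥ A) - (c +ᵥ A) = A - A := by
    rw [← singleton_add, add_sub_add_comm, singleton_sub_singleton, sub_self, singleton_zero,
      zero_add]
  rw [MSTD, h_sub, vadd_add_vadd_comm, card_vadd_finset, MSTD]

lemma mstd_neg_iff : MSTD (-A) ↔ MSTD A := by
  simp only [MSTD, neg_sub_neg, ← neg_add, Finset.card_neg]

end Symmetry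

section Partition

/-- `S` has a partition into exactly `k` MSTD sets, indexed by `Fin k`. No part is required to be
nonempty, since `∅` is not MSTD. -/
def HasMSTDPartition (k : ℕ) (S : Finset ℤ) : Prop :=
  ∃ f : Fin k → Finset ℤ, (∀ i, MSTD (f i)) ∧
    (∀ i j, i ≠ j → Disjoint (f i) (f j)) ∧ Finset.univ.biUnion f = S

variable {k l : ℕ} {S T A : Finset ℤ}

lemma MSTD.hasMSTDPartition_one (hA : MSTD A) : HasMSTDPartition 1 A :=
  ⟨fun _ => A, fun _ => hA, fun i j hij => (hij (Subsingleton.elim i j)).elim, by simp⟩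

lemma HasMSTDPartition.union (hS : HasMSTDPartition k S) (hT : HasMSTDPartition l T)
    (hST : Disjoint S T) : HasMSTDPartition (k + l) (S ∪ T) := by
  obtain ⟨f, hf, hf_disj, rfl⟩ := hS
  obtain ⟨g, hg, hg_disj, rfl⟩ := hT
  have hfg : ∀ i j, Disjoint (f i) (g j) := fun i j =>
    hST.mono (subset_biUnion_of_mem f (mem_univ i)) (subset_biUnion_of_mem g (mem_univ j))
  refine ⟨Fin.append f g, Fin.addCases (by simpa using hf) (by simpa using hg),
    fun i j => ?_, ?_⟩
  · induction i using Fin.addCases <;> induction j using Fin.addCases <;> intro hij <;>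
      simp only [Fin.append_left, Fin.append_right]
    · exact hf_disj _ _ (mt (congrArg _) hij)
    · exact hfg _ _
    · exact (hfg _ _).symm
    · exact hg_disj _ _ (mt (congrArg _) hij)
  · ext x
    simp only [mem_biUnion, mem_univ, true_and, mem_union, ← finSumFinEquiv.exists_congr_right,
      Sum.exists, finSumFinEquiv_apply_left, finSumFinEquiv_apply_right, Fin.append_left,
      Fin.append_right]

lemma HasMSTDPartition.vadd (hS : HasMSTDPartition k S) (c : ℤ) :
    HasMSTDPartition k (c +ᵥ S) := by
  obtain ⟨f, hf, hf_disj, rfl⟩ := hS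
  exact ⟨fun i => c +ᵥ f i, fun i => mstd_vadd_iff.2 (hf i),
    fun i j hij => (disjoint_image (add_right_injective c)).2 (hf_disj i j hij),
    biUnion_image.symm⟩

lemma hasMSTDPartition_two_of_sdiff (hAS : A ⊆ S) (hA : MSTD A) (hA' : MSTD (S \ A)) :
    HasMSTDPartition 2 S :=
  union_sdiff_of_subset hAS ▸
    hA.hasMSTDPartition_one.union hA'.hasMSTDPartition_one disjoint_sdiff

lemma hasMSTDPartition_mul_Icc {N : ℕ} (h : ∀ n : ℤ, N ≤ n → HasMSTDPartition k (Icc 1 n))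
    {m : ℕ} (hm : 1 ≤ m) {r : ℤ} (hr : m * N ≤ r) : HasMSTDPartition (m * k) (Icc 1 r) := by
  induction m, hm using Nat.le_induction generalizing r with
  | base => simpa using h r (by simpa using hr)
  | succ m _ ih =>
    push_cast at hr
    have h_init : HasMSTDPartition (m * k) (Icc 1 (r - N)) := ih (by linarith)
    have h_last : HasMSTDPartition k (Icc (r - N + 1) r) := by
      have h_shift : (r - N) +ᵥ Icc (1 : ℤ) N = Icc (r - N + 1) (r - N + N) :=
        image_add_left_Icc _ _ _
      rw [sub_add_cancel] at h_shift
      exact h_shift ▸ (h N le_rfl).vadd (r - N)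
    have h_disj : Disjoint (Icc 1 (r - N)) (Icc (r - N + 1) r) :=
      disjoint_left.2 fun x hx hx' => by rw [mem_Icc] at hx hx'; omega
    have h_union : Icc 1 (r - N) ∪ Icc (r - N + 1) r = Icc 1 r := by
      have h_nonneg : 0 ≤ r - N := le_trans (by positivity) (by linarith : (m : ℤ) * N ≤ r - N)
      ext x
      simp only [mem_union, mem_Icc]
      omega
    rw [add_one_mul, ← h_union]
    exact h_init.union h_last h_disj

end Partition

section Fringes

/-- The elements in `[1, 11]` of the MSTD sets constructed here. The complement of `lowerFringe` in
`[1, 11]` is the image of `upperFringe` under `x ↦ 1 - x`. -/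
def lowerFringe : Finset ℤ := {1, 2, 3, 6, 9, 10, 11}

/-- The elements in `[n - 10, n]` of the MSTD sets constructed here, relative to `n`. -/
def upperFringe : Finset ℤ := {-7, -6, -4, -3}

lemma mem_lowerFringe {x : ℤ} :
    x ∈ lowerFringe ↔ x = 1 ∨ x = 2 ∨ x = 3 ∨ x = 6 ∨ x = 9 ∨ x = 10 ∨ x = 11 := by
  simp only [lowerFringe, mem_insert, mem_singleton]

lemma mem_upperFringe {x : ℤ} : x ∈ upperFringe ↔ x = -7 ∨ x = -6 ∨ x = -4 ∨ x = -3 := by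
  simp only [upperFringe, mem_insert, mem_singleton]

/-- Subsets of `[1, n]` with elements `lowerFringe` in the window `[1, 11]` and `n + upperFringe` in
the window `[n - 10, n]` that meet every pair of consecutive integers between the windows. -/
structure HasFringes (n : ℤ) (C : Finset ℤ) : Prop where
  subset_Icc : C ⊆ Icc 1 n
  mem_iff_lower : ∀ x ∈ Icc 1 11, x ∈ C ↔ x ∈ lowerFringe
  mem_iff_upper : ∀ x ∈ Icc (-10) 0, n + x ∈ C ↔ x ∈ upperFringe
  mem_or_succ_mem : ∀ x ∈ Icc 12 (n - 12), x ∈ C ∨ x + 1 ∈ C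

namespace HasFringes

variable {n : ℤ} {C : Finset ℤ}

lemma lowerFringe_subset (hC : HasFringes n C) : lowerFringe ⊆ C := fun x hx =>
  (hC.mem_iff_lower x ((by decide : lowerFringe ⊆ Icc 1 11) hx)).2 hx

lemma vadd_upperFringe_subset (hC : HasFringes n C) : n +ᵥ upperFringe ⊆ C := by
  intro y hy
  obtain ⟨x, hx, rfl⟩ := mem_vadd_finset.1 hy
  exact (hC.mem_iff_upper x ((by decide : upperFringe ⊆ Icc (-10) 0) hx)).2 hx

lemma mem_lower (hC : HasFringes n C) {x : ℤ} (hx : x ∈ C) (hx' : x ≤ 11) : x ∈ lowerFringe :=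
  (hC.mem_iff_lower x (mem_Icc.2 ⟨(mem_Icc.1 (hC.subset_Icc hx)).1, hx'⟩)).1 hx

lemma sub_mem_upper (hC : HasFringes n C) {x : ℤ} (hx : x ∈ C) (hx' : n - 10 ≤ x) :
    x - n ∈ upperFringe := by
  have hxn := (mem_Icc.1 (hC.subset_Icc hx)).2
  exact (hC.mem_iff_upper _ (mem_Icc.2 ⟨by omega, by omega⟩)).1 (by simpa using hx)

lemma twenty_two_le (hC : HasFringes n C) : 22 ≤ n := by
  have h_up : ∀ x ∈ lowerFringe, n - 10 ≤ x → x - n ∈ upperFringe := fun x hx =>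
    hC.sub_mem_upper (hC.lowerFringe_subset hx)
  have h9 := h_up 9 (by decide)
  have h10 := h_up 10 (by decide)
  have h11 := h_up 11 (by decide)
  simp only [mem_upperFringe] at h9 h10 h11
  omega

lemma sub_subset (hC : HasFringes n C) :
    C - C ⊆ ((Icc (-(n - 4)) (n - 4)).erase (n - 11)).erase (-(n - 11)) := by
  have h_le : ∀ a ∈ C, 1 ≤ a ∧ a ≤ n - 3 := by
    intro a ha
    have ha' := mem_Icc.1 (hC.subset_Icc ha)
    have h_up := hC.sub_mem_upper ha
    rw [mem_upperFringe] at h_up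
    omega
  -- Elements `n - 11` apart lie in the two windows, where the patterns exclude each other.
  have h_ne : ∀ a ∈ C, ∀ b ∈ C, a - b ≠ n - 11 := by
    intro a ha b hb hab
    have hb_low := hC.mem_lower hb (by have := h_le a ha; omega)
    have ha_up := hC.sub_mem_upper ha (by have := h_le b hb; omega)
    rw [mem_lowerFringe] at hb_low
    rw [mem_upperFringe] at ha_up
    omega
  intro d hd
  obtain ⟨a, ha, b, hb, rfl⟩ := mem_sub.1 hd
  have hab := h_ne a ha b hb
  have hba := h_ne b hb a ha
  have ha' := h_le a ha
  have hb' := h_le b hb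
  simp only [mem_erase, mem_Icc]
  omega

lemma mem_or_succ_mem_of_eight_le (hC : HasFringes n C) {x : ℤ} (hx : x ∈ Icc 8 (n - 12)) :
    x ∈ C ∨ x + 1 ∈ C := by
  rw [mem_Icc] at hx
  obtain h | h := le_or_gt x 11
  · have h_fringe : x ∈ lowerFringe ∨ x + 1 ∈ lowerFringe := by
      rw [mem_lowerFringe, mem_lowerFringe]
      omega
    exact h_fringe.imp (hC.lowerFringe_subset ·) (hC.lowerFringe_subset ·)
  · exact hC.mem_or_succ_mem x (mem_Icc.2 ⟨by omega, hx.2⟩)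

lemma subset_add (hC : HasFringes n C) : (Icc 2 (2 * n - 6)).erase (n + 1) ⊆ C + C := by
  have hL := hC.lowerFringe_subset
  have hU := hC.vadd_upperFringe_subset
  have h_LL : Icc 2 22 ⊆ C + C :=
    (by decide : Icc 2 22 ⊆ lowerFringe + lowerFringe).trans (add_subset_add hL hL)
  have h_LM : Icc (9 + 1 + 8) (9 + 1 + (n - 12)) ⊆ C + C :=
    Icc_subset_add_of_mem_or_succ_mem (hL (by decide)) (hL (by decide))
      fun _ => hC.mem_or_succ_mem_of_eight_le
  have h_LU : n +ᵥ (Icc (-6) 8).erase 1 ⊆ C + C := by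
    refine Subset.trans ?_ (add_subset_add hL hU)
    rw [add_vadd_comm]
    exact vadd_finset_subset_vadd_finset (by decide)
  have h_MU : Icc (n + -4 + 1 + 8) (n + -4 + 1 + (n - 12)) ⊆ C + C :=
    Icc_subset_add_of_mem_or_succ_mem (hU (vadd_mem_vadd_finset (by decide)))
      (hU (by rw [add_assoc]; exact vadd_mem_vadd_finset (by decide)))
      fun _ => hC.mem_or_succ_mem_of_eight_le
  have h_UU : (n + n) +ᵥ Icc (-14) (-6) ⊆ C + C := by
    refine Subset.trans ?_ (add_subset_add hU hU)
    rw [vadd_add_vadd_comm]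
    exact vadd_finset_subset_vadd_finset (by decide)
  intro x hx
  simp only [mem_erase, mem_Icc] at hx
  have h_cover : x ≤ 22 ∨ (18 ≤ x ∧ x ≤ n - 2) ∨ (n - 6 ≤ x ∧ x ≤ n + 8) ∨
      (n + 5 ≤ x ∧ x ≤ 2 * n - 15) ∨ 2 * n - 14 ≤ x := by omega
  rcases h_cover with h | h | h | h | h
  · exact h_LL (mem_Icc.2 (by omega))
  · exact h_LM (mem_Icc.2 (by omega))
  · exact h_LU (mem_vadd_finset.2
      ⟨x - n, mem_erase.2 ⟨by omega, mem_Icc.2 (by omega)⟩, add_sub_cancel n x⟩)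
  · exact h_MU (mem_Icc.2 (by omega))
  · exact h_UU (mem_vadd_finset.2 ⟨x - (n + n), mem_Icc.2 (by omega), add_sub_cancel (n + n) x⟩)

theorem mstd (hC : HasFringes n C) : MSTD C := by
  have hn := hC.twenty_two_le
  have h_diff : (C - C).card ≤ (2 * n - 9).toNat := by
    refine (card_le_card hC.sub_subset).trans_eq ?_
    rw [card_erase_of_mem (by simp only [mem_erase, mem_Icc]; omega),
      card_erase_of_mem (by simp only [mem_Icc]; omega), Int.card_Icc]
    omega
  have h_sum : (2 * n - 8).toNat ≤ (C + C).card := by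
    refine Eq.trans_le ?_ (card_le_card hC.subset_add)
    rw [card_erase_of_mem (by simp only [mem_Icc]; omega), Int.card_Icc]
    omega
  exact h_diff.trans_lt (lt_of_lt_of_le (by omega) h_sum)

lemma reflect_sdiff (hC : HasFringes n C)
    (h_alt : ∀ x ∈ Icc 12 (n - 12), x ∉ C ∨ x + 1 ∉ C) :
    HasFringes n ((n + 1) +ᵥ -(Icc 1 n \ C)) where
  subset_Icc x hx := by
    rw [mem_vadd_neg_iff, mem_sdiff, mem_Icc] at hx
    exact mem_Icc.2 (by omega)
  mem_iff_lower x hx := by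
    have h_compl : ∀ x ∈ Icc 1 11, 1 - x ∉ upperFringe ↔ x ∈ lowerFringe := by decide
    rw [← h_compl x hx]
    rw [mem_Icc] at hx
    have hn := hC.twenty_two_le
    rw [← hC.mem_iff_upper (1 - x) (mem_Icc.2 (by omega)), mem_vadd_neg_iff, mem_sdiff, mem_Icc,
      add_sub_assoc]
    exact and_iff_right (by omega)
  mem_iff_upper x hx := by
    have h_compl : ∀ x ∈ Icc (-10) 0, 1 - x ∉ lowerFringe ↔ x ∈ upperFringe := by decide
    rw [← h_compl x hx]
    rw [mem_Icc] at hx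
    have hn := hC.twenty_two_le
    rw [← hC.mem_iff_lower (1 - x) (mem_Icc.2 (by omega)), mem_vadd_neg_iff, mem_sdiff, mem_Icc,
      add_sub_add_left_eq_sub]
    exact and_iff_right (by omega)
  mem_or_succ_mem x hx := by
    rw [mem_Icc] at hx
    have h := h_alt (n - x) (mem_Icc.2 (by omega))
    rw [sub_add_eq_add_sub] at h
    simp only [mem_vadd_neg_iff, mem_sdiff, mem_Icc, add_sub_add_right_eq_sub]
    exact h.symm.imp (⟨by omega, ·⟩) (⟨by omega, ·⟩)

end HasFringes

/-- The two fringes together with the odd integers between the windows: one of the two MSTD sets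
into which `[1, n]` is split. -/
noncomputable def fringedOdds (n : ℤ) : Finset ℤ :=
  lowerFringe ∪ {x ∈ Icc 12 (n - 11) | Odd x} ∪ (n +ᵥ upperFringe)

section FringedOdds

variable {n x : ℤ}

lemma mem_fringedOdds : x ∈ fringedOdds n ↔
    x ∈ lowerFringe ∨ (12 ≤ x ∧ x ≤ n - 11 ∧ Odd x) ∨ x - n ∈ upperFringe := by
  rw [fringedOdds, mem_union, mem_union, mem_filter, mem_Icc, ← neg_vadd_mem_iff, vadd_eq_add,
    neg_add_eq_sub, or_assoc, and_assoc]

lemma succ_mem_fringedOdds_iff (hx : x ∈ Icc 12 (n - 12)) :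
    x + 1 ∈ fringedOdds n ↔ x ∉ fringedOdds n := by
  rw [mem_Icc] at hx
  simp only [mem_fringedOdds, mem_lowerFringe, mem_upperFringe, Int.odd_iff]
  omega

lemma hasFringes_fringedOdds (hn : 22 ≤ n) : HasFringes n (fringedOdds n) where
  subset_Icc x := by
    rw [mem_fringedOdds, mem_lowerFringe, mem_upperFringe, mem_Icc]
    omega
  mem_iff_lower x hx := by
    rw [mem_Icc] at hx
    rw [mem_fringedOdds, mem_lowerFringe, mem_upperFringe]
    omega
  mem_iff_upper x hx := by
    rw [mem_Icc] at hx
    rw [mem_fringedOdds, mem_lowerFringe, add_sub_cancel_left, mem_upperFringe]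
    omega
  mem_or_succ_mem x hx := (em _).imp_right (succ_mem_fringedOdds_iff hx).2

lemma mstd_sdiff_fringedOdds (hn : 22 ≤ n) : MSTD (Icc 1 n \ fringedOdds n) := by
  have h_reflect : HasFringes n ((n + 1) +ᵥ -(Icc 1 n \ fringedOdds n)) :=
    (hasFringes_fringedOdds hn).reflect_sdiff fun x hx =>
      (em _).imp_left (succ_mem_fringedOdds_iff hx).1
  exact mstd_neg_iff.1 (mstd_vadd_iff.1 h_reflect.mstd)

end FringedOdds

end Fringes

lemma hasMSTDPartition_two_Icc {n : ℤ} (hn : 20 ≤ n) : HasMSTDPartition 2 (Icc 1 n) := by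
  obtain h | rfl | rfl : 22 ≤ n ∨ n = 20 ∨ n = 21 := by omega
  · exact hasMSTDPartition_two_of_sdiff (hasFringes_fringedOdds h).subset_Icc
      (hasFringes_fringedOdds h).mstd (mstd_sdiff_fringedOdds h)
  · exact hasMSTDPartition_two_of_sdiff (A := {3, 5, 6, 7, 10, 14, 15, 17})
      (by decide) (by decide +kernel) (by decide +kernel)
  · exact hasMSTDPartition_two_of_sdiff (A := {1, 4, 5, 6, 8, 11, 12, 16, 18, 19})
      (by decide) (by decide +kernel) (by decide +kernel)

theorem stmt9 (k : ℕ) (hk : 2 ≤ k) (hkeven : Even k) (r : ℤ) (hr : 10 * (k : ℤ) ≤ r) :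
    ∃ f : Fin k → Finset ℤ, (∀ i, MSTD (f i)) ∧
      (∀ i j, i ≠ j → Disjoint (f i) (f j)) ∧
      Finset.univ.biUnion f = Finset.Icc 1 r := by
  obtain ⟨m, rfl⟩ := hkeven.exists_two_nsmul
  rw [smul_eq_mul, mul_comm 2 m] at *
  exact hasMSTDPartition_mul_Icc (N := 20) (fun n hn => hasMSTDPartition_two_Icc hn) (by omega)
    (by push_cast at hr ⊢; linarith)
end

section
/- For every odd integer k ≥ 5 and every integer r ≥ 20k − 14, the interval [1,r] can be partitioned into exactly k pairwise disjoint MSTD subsets whose union is [1,r]. -/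
open Finset Pointwise

/-!
Conway's set `C = {0, 2, 3, 4, 7, 11, 12, 14}` is MSTD, and so is the union of two translates of it
that are far apart: there the sumset consists of three disjoint translates of `C + C`, while three
translates of `C - C` cover the difference set. Remove from `[0, n)`, `n ≥ 49`, the translates
`2 + C` and `(n - 18) + C`. What is left is MSTD, because among all the conceivable sums it lacks
only `5`, whereas it lacks the two differences `±(n - 7)`. Keeping the two translates of `C`
together or apart therefore splits every interval of length at least `49` into two, and also into
three, MSTD sets. Finally `[0, 28)` splits into three MSTD sets, and cutting off such intervals
reduces the number of parts by three at a time, down to `2`, `3` or `4 = 2 + 2`.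
-/

section Translation

lemma vadd_finset_sub_vadd_finset_comm {G : Type*} [AddCommGroup G] [DecidableEq G] (s t : G)
    (A B : Finset G) : (s +ᵥ A) - (t +ᵥ B) = (s - t) +ᵥ (A - B) := by
  simp only [← singleton_vadd, vadd_eq_add]
  rw [add_sub_add_comm, singleton_sub_singleton]

section Ordered

variable {G : Type*} [AddCommGroup G] [LinearOrder G] [IsOrderedAddMonoid G] [LocallyFiniteOrder G]

lemma vadd_finset_Ico (t a b : G) : t +ᵥ Ico a b = Ico (t + a) (t + b) :=
  image_add_left_Ico a b t

lemma disjoint_vadd_finset_of_subset_Icc {A : Finset G} {a b s t : G} (hA : A ⊆ Icc a b)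
    (hst : b - a < t - s) : Disjoint (s +ᵥ A) (t +ᵥ A) := by
  simp only [disjoint_left, mem_vadd_finset, vadd_eq_add]
  rintro _ ⟨x, hx, rfl⟩ ⟨y, hy, hxy⟩
  refine hst.not_ge ?_
  calc t - s = x - y := sub_eq_sub_iff_add_eq_add.2 (hxy.trans (add_comm s x))
    _ ≤ b - a := sub_le_sub (mem_Icc.1 (hA hx)).2 (mem_Icc.1 (hA hy)).1

end Ordered

lemma MSTD.nonempty {A : Finset ℤ} (hA : MSTD A) : A.Nonempty := by
  rw [nonempty_iff_ne_empty]
  rintro rfl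
  simp [MSTD] at hA

lemma MSTD.vadd {A : Finset ℤ} (hA : MSTD A) (t : ℤ) : MSTD (t +ᵥ A) := by
  rw [MSTD, vadd_finset_sub_vadd_finset_comm, vadd_add_vadd_comm, card_vadd_finset,
    card_vadd_finset]
  exact hA

lemma MSTD.vadd_union_vadd {A : Finset ℤ} (hA : MSTD A) {a b s t : ℤ} (hAab : A ⊆ Icc a b)
    (hst : 2 * (b - a) < t - s) : MSTD ((s +ᵥ A) ∪ (t +ᵥ A)) := by
  have hsum : ((s +ᵥ A) ∪ (t +ᵥ A)) + ((s +ᵥ A) ∪ (t +ᵥ A)) =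
      ((s + s) +ᵥ (A + A)) ∪ ((s + t) +ᵥ (A + A)) ∪ ((t + t) +ᵥ (A + A)) := by
    simp only [union_add, add_union, vadd_add_vadd_comm, add_comm t s]
    grind
  have hdiff : ((s +ᵥ A) ∪ (t +ᵥ A)) - ((s +ᵥ A) ∪ (t +ᵥ A)) =
      ((0 : ℤ) +ᵥ (A - A)) ∪ ((s - t) +ᵥ (A - A)) ∪ ((t - s) +ᵥ (A - A)) := by
    simp only [union_sub, sub_union, vadd_finset_sub_vadd_finset_comm, sub_self]
    grind
  have hab : a ≤ b := nonempty_Icc.1 (hA.nonempty.mono hAab)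
  have hAA : A + A ⊆ Icc (a + a) (b + b) :=
    (add_subset_add hAab hAab).trans (Icc_add_Icc_subset a b a b)
  have hdisj : Disjoint ((s + s) +ᵥ (A + A)) ((s + t) +ᵥ (A + A)) :=
    disjoint_vadd_finset_of_subset_Icc hAA (by omega)
  have hdisj' : Disjoint (((s + s) +ᵥ (A + A)) ∪ ((s + t) +ᵥ (A + A))) ((t + t) +ᵥ (A + A)) :=
    disjoint_union_left.2 ⟨disjoint_vadd_finset_of_subset_Icc hAA (by omega),
      disjoint_vadd_finset_of_subset_Icc hAA (by omega)⟩
  calc #(((s +ᵥ A) ∪ (t +ᵥ A)) - ((s +ᵥ A) ∪ (t +ᵥ A)))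
      ≤ #(A - A) + #(A - A) + #(A - A) := by
        rw [hdiff]
        refine (card_union_le _ _).trans (add_le_add ((card_union_le _ _).trans ?_) ?_) <;>
          simp only [card_vadd_finset, le_refl]
    _ < #(A + A) + #(A + A) + #(A + A) := by
        rw [MSTD] at hA
        omega
    _ = #(((s +ᵥ A) ∪ (t +ᵥ A)) + ((s +ᵥ A) ∪ (t +ᵥ A))) := by
        rw [hsum, card_union_of_disjoint hdisj', card_union_of_disjoint hdisj]
        simp only [card_vadd_finset]

end Translation

/-- `SplitsIntoMSTD k S` says that `S` can be partitioned into `k` MSTD sets. -/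
def SplitsIntoMSTD (k : ℕ) (S : Finset ℤ) : Prop :=
  ∃ f : Fin k → Finset ℤ, (∀ i, MSTD (f i)) ∧
    (∀ i j, i ≠ j → Disjoint (f i) (f j)) ∧ Finset.univ.biUnion f = S

lemma MSTD.splitsIntoMSTD_one {A : Finset ℤ} (hA : MSTD A) : SplitsIntoMSTD 1 A :=
  ⟨fun _ => A, fun _ => hA, fun i j hij => absurd (Subsingleton.elim i j) hij, by simp⟩

namespace SplitsIntoMSTD

lemma union {k l : ℕ} {S T : Finset ℤ} (hS : SplitsIntoMSTD k S) (hT : SplitsIntoMSTD l T)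
    (hST : Disjoint S T) : SplitsIntoMSTD (k + l) (S ∪ T) := by
  obtain ⟨f, hf, hfdisj, rfl⟩ := hS
  obtain ⟨g, hg, hgdisj, rfl⟩ := hT
  have hfg (i j) : Disjoint (f i) (g j) :=
    hST.mono (subset_biUnion_of_mem f (mem_univ i)) (subset_biUnion_of_mem g (mem_univ j))
  refine ⟨Fin.append f g, ?_, ?_, ?_⟩
  · simp [Fin.forall_fin_add, hf, hg]
  · simp only [Fin.forall_fin_add, Fin.append_left, Fin.append_right]
    exact ⟨fun i => ⟨fun j hij => hfdisj i j (ne_of_apply_ne _ hij), fun j _ => hfg i j⟩,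
      fun i => ⟨fun j _ => (hfg j i).symm, fun j hij => hgdisj i j (ne_of_apply_ne _ hij)⟩⟩
  · ext x
    rw [← not_iff_not]
    simp [Fin.forall_fin_add]

lemma vadd {k : ℕ} {S : Finset ℤ} (hS : SplitsIntoMSTD k S) (t : ℤ) :
    SplitsIntoMSTD k (t +ᵥ S) := by
  obtain ⟨f, hf, hfdisj, rfl⟩ := hS
  refine ⟨fun i => t +ᵥ f i, fun i => (hf i).vadd t, fun i j hij => ?_, ?_⟩
  · exact (disjoint_image (AddAction.injective t)).2 (hfdisj i j hij)
  · exact (biUnion_image ..).symm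

lemma Ico_append {k l : ℕ} {a b c : ℤ} (hab : a ≤ b) (hbc : b ≤ c)
    (h : SplitsIntoMSTD k (Ico a b)) (h' : SplitsIntoMSTD l (Ico b c)) :
    SplitsIntoMSTD (k + l) (Ico a c) := by
  rw [← Ico_union_Ico_eq_Ico hab hbc]
  exact h.union h' (Ico_disjoint_Ico_consecutive a b c)

lemma Ico_of_Ico_zero {k : ℕ} {a b : ℤ} (h : SplitsIntoMSTD k (Ico 0 (b - a))) :
    SplitsIntoMSTD k (Ico a b) := by
  simpa only [vadd_finset_Ico, add_zero, add_sub_cancel] using h.vadd a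

end SplitsIntoMSTD

section Conway

/-- Conway's MSTD set, from translates of which and their complements the partitions are built. -/
def conway : Finset ℤ := {0, 2, 3, 4, 7, 11, 12, 14}

lemma mstd_conway : MSTD conway := by
  unfold MSTD
  decide +kernel

lemma conway_subset_Icc : conway ⊆ Icc 0 14 := by
  decide

lemma mem_vadd_conway {t x : ℤ} : x ∈ t +ᵥ conway ↔
    x = t ∨ x = t + 2 ∨ x = t + 3 ∨ x = t + 4 ∨ x = t + 7 ∨ x = t + 11 ∨ x = t + 12 ∨
      x = t + 14 := by
  rw [← neg_vadd_mem_iff, vadd_eq_add, conway]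
  simp only [mem_insert, mem_singleton]
  omega

lemma splitsIntoMSTD_three_Ico_add_28 (a : ℤ) : SplitsIntoMSTD 3 (Ico a (a + 28)) := by
  have hrest : MSTD (Ico 0 28 \ (conway ∪ ((13 : ℤ) +ᵥ conway))) := by
    unfold MSTD
    decide +kernel
  have h := (mstd_conway.splitsIntoMSTD_one.union
    (mstd_conway.vadd 13).splitsIntoMSTD_one (by decide)).union
    hrest.splitsIntoMSTD_one disjoint_sdiff
  rw [union_sdiff_of_subset (by decide)] at h
  exact SplitsIntoMSTD.Ico_of_Ico_zero (by simpa using h)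

/-- The union of the two translates of Conway's set that are removed from `[0, n)`. They leave
two places free on the left and three on the right, so that the complement misses the differences
`±(n - 7)`. -/
def conwayPair (n : ℤ) : Finset ℤ := ((2 : ℤ) +ᵥ conway) ∪ ((n - 18) +ᵥ conway)

/-- The part of `[0, n)` left over by the two translates of Conway's set. Irreducible, lest
elaboration evaluate its sums and differences. -/
@[irreducible] noncomputable def conwayPairCompl (n : ℤ) : Finset ℤ := Ico 0 n \ conwayPair n

lemma mem_conwayPairCompl {n x : ℤ} : x ∈ conwayPairCompl n ↔
    (0 ≤ x ∧ x < n) ∧ ¬(x ∈ (2 : ℤ) +ᵥ conway ∨ x ∈ (n - 18) +ᵥ conway) := by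
  rw [conwayPairCompl, conwayPair, mem_sdiff, mem_Ico, mem_union]

lemma conwayPair_subset_Ico {n : ℤ} (hn : 18 ≤ n) : conwayPair n ⊆ Ico 0 n := by
  intro x hx
  simp only [conwayPair, mem_union, mem_vadd_conway] at hx
  rw [mem_Ico]
  omega

lemma mstd_conwayPair {n : ℤ} (hn : 49 ≤ n) : MSTD (conwayPair n) :=
  mstd_conway.vadd_union_vadd conway_subset_Icc (by omega)

/-- The elements of `conwayPairCompl n` that are at most `30`; they do not depend on `n ≥ 49`. -/
noncomputable def leftFringe : Finset ℤ := Icc 0 30 \ ((2 : ℤ) +ᵥ conway)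

/-- The `32` rightmost places of `[0, n)` without the removed translate of Conway's set, shifted by
`-n` so as not to depend on `n`. -/
noncomputable def rightFringe : Finset ℤ := Icc (-32) (-1) \ ((-18 : ℤ) +ᵥ conway)

lemma leftFringe_add_leftFringe : Icc 0 33 \ {5} ⊆ leftFringe + leftFringe := by
  unfold leftFringe
  decide +kernel

lemma rightFringe_add_rightFringe : Icc (-37) (-2) ⊆ rightFringe + rightFringe := by
  decide +kernel

lemma leftFringe_subset_conwayPairCompl {n : ℤ} (hn : 49 ≤ n) :
    leftFringe ⊆ conwayPairCompl n := by
  intro x hx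
  rw [leftFringe, mem_sdiff, mem_Icc] at hx
  simp only [mem_conwayPairCompl, mem_vadd_conway] at hx ⊢
  omega

lemma vadd_rightFringe_subset_conwayPairCompl {n : ℤ} (hn : 49 ≤ n) :
    n +ᵥ rightFringe ⊆ conwayPairCompl n := by
  intro x hx
  obtain ⟨y, hy, rfl⟩ := mem_vadd_finset.1 hx
  rw [rightFringe, mem_sdiff, mem_Icc] at hy
  simp only [mem_conwayPairCompl, mem_vadd_conway, vadd_eq_add] at hy ⊢
  omega

lemma Icc_subset_conwayPairCompl (n : ℤ) : Icc 17 (n - 19) ⊆ conwayPairCompl n := by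
  intro x hx
  rw [mem_Icc] at hx
  simp only [mem_conwayPairCompl, mem_vadd_conway]
  omega

lemma Icc_sdiff_subset_conwayPairCompl_add {n : ℤ} (hn : 49 ≤ n) :
    Icc 0 (2 * n - 2) \ {5} ⊆ conwayPairCompl n + conwayPairCompl n := by
  intro s hs
  rw [mem_sdiff, mem_Icc] at hs
  obtain hleft | hmid | hright : s ≤ 33 ∨ 34 ≤ s ∧ s ≤ 2 * n - 38 ∨ 2 * n - 37 ≤ s := by omega
  · have hsub := leftFringe_subset_conwayPairCompl hn
    exact add_subset_add hsub hsub <| leftFringe_add_leftFringe <|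
      mem_sdiff.2 ⟨mem_Icc.2 ⟨hs.1.1, hleft⟩, hs.2⟩
  · have hsub := Icc_subset_conwayPairCompl n
    refine add_subset_add hsub hsub ?_
    rw [← mem_coe, coe_add, coe_Icc, Set.Icc_add_Icc (by omega) (by omega), Set.mem_Icc]
    omega
  · have hsub := vadd_rightFringe_subset_conwayPairCompl hn
    refine add_subset_add hsub hsub ?_
    rw [vadd_add_vadd_comm, ← neg_vadd_mem_iff, vadd_eq_add]
    exact rightFringe_add_rightFringe (mem_Icc.2 ⟨by omega, by omega⟩)

lemma conwayPairCompl_sub_subset (n : ℤ) :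
    conwayPairCompl n - conwayPairCompl n ⊆ Ioo (-n) n \ {n - 7, 7 - n} := by
  intro d hd
  obtain ⟨x, hx, y, hy, rfl⟩ := mem_sub.1 hd
  simp only [mem_conwayPairCompl, mem_vadd_conway] at hx hy
  simp only [mem_sdiff, mem_Ioo, mem_insert, mem_singleton]
  -- If `x - y = n - 7`, then `0 ≤ y ≤ 6`, and for each of these `y` either `y` or `x = n - 7 + y`
  -- has been removed; likewise with `x` and `y` exchanged.
  omega

lemma mstd_conwayPairCompl {n : ℤ} (hn : 49 ≤ n) : MSTD (conwayPairCompl n) := by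
  have hpair : {n - 7, 7 - n} ⊆ Ioo (-n) n := by
    intro x hx
    simp only [mem_insert, mem_singleton] at hx
    rw [mem_Ioo]
    omega
  calc #(conwayPairCompl n - conwayPairCompl n)
      ≤ #(Ioo (-n) n \ {n - 7, 7 - n}) := card_le_card (conwayPairCompl_sub_subset n)
    _ = #(Ioo (-n) n) - 2 := by rw [card_sdiff_of_subset hpair, card_pair (by omega)]
    _ < #(Icc 0 (2 * n - 2)) - #{(5 : ℤ)} := by
      rw [Int.card_Ioo, Int.card_Icc, card_singleton]
      omega
    _ ≤ #(Icc 0 (2 * n - 2) \ {5}) := le_card_sdiff _ _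
    _ ≤ #(conwayPairCompl n + conwayPairCompl n) :=
      card_le_card (Icc_sdiff_subset_conwayPairCompl_add hn)

lemma SplitsIntoMSTD.Ico_of_conwayPair {k : ℕ} {n : ℤ} (hn : 49 ≤ n)
    (h : SplitsIntoMSTD k (conwayPair n)) : SplitsIntoMSTD (k + 1) (Ico 0 n) := by
  rw [← union_sdiff_of_subset (conwayPair_subset_Ico (n := n) (by omega))]
  have hcompl := mstd_conwayPairCompl hn
  rw [conwayPairCompl] at hcompl
  exact h.union hcompl.splitsIntoMSTD_one disjoint_sdiff

lemma splitsIntoMSTD_two_Ico {a b : ℤ} (hab : a + 49 ≤ b) : SplitsIntoMSTD 2 (Ico a b) := by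
  have hn : 49 ≤ b - a := by omega
  exact .Ico_of_Ico_zero (.Ico_of_conwayPair hn (mstd_conwayPair hn).splitsIntoMSTD_one)

lemma splitsIntoMSTD_three_Ico {a b : ℤ} (hab : a + 49 ≤ b) : SplitsIntoMSTD 3 (Ico a b) := by
  have hn : 49 ≤ b - a := by omega
  have hpair : SplitsIntoMSTD 2 (conwayPair (b - a)) :=
    (mstd_conway.vadd _).splitsIntoMSTD_one.union (mstd_conway.vadd _).splitsIntoMSTD_one
      (disjoint_vadd_finset_of_subset_Icc conway_subset_Icc (by omega))
  exact .Ico_of_Ico_zero (.Ico_of_conwayPair hn hpair)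

end Conway

lemma SplitsIntoMSTD.Ico_of_Ico_add_28 {k : ℕ} {a b : ℤ} (hab : a + 28 ≤ b)
    (h : SplitsIntoMSTD k (Ico (a + 28) b)) : SplitsIntoMSTD (k + 3) (Ico a b) :=
  add_comm 3 k ▸ (splitsIntoMSTD_three_Ico_add_28 a).Ico_append (by omega) hab h

lemma splitsIntoMSTD_Ico {k : ℕ} (hk : 5 ≤ k) {a b : ℤ} (hab : a + (20 * k - 14) ≤ b) :
    SplitsIntoMSTD k (Ico a b) := by
  induction k using Nat.strong_induction_on generalizing a with
  | h k ih =>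
    obtain ⟨l, rfl⟩ : ∃ l, k = l + 3 := ⟨k - 3, by omega⟩
    push_cast at hab
    refine .Ico_of_Ico_add_28 (by omega) ?_
    obtain rfl | rfl | rfl | hl : l = 2 ∨ l = 3 ∨ l = 4 ∨ 5 ≤ l := by omega
    · exact splitsIntoMSTD_two_Ico (by omega)
    · exact splitsIntoMSTD_three_Ico (by omega)
    · exact (splitsIntoMSTD_two_Ico (b := a + 77) (by omega)).Ico_append (by omega) (by omega)
        (splitsIntoMSTD_two_Ico (by omega))
    · exact ih l (by omega) hl (by omega)

theorem stmt10_general (k : ℕ) (hk : 5 ≤ k) (r : ℤ) (hr : 20 * (k : ℤ) - 14 ≤ r) :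
    ∃ f : Fin k → Finset ℤ, (∀ i, MSTD (f i)) ∧
      (∀ i j, i ≠ j → Disjoint (f i) (f j)) ∧
      Finset.univ.biUnion f = Finset.Icc 1 r := by
  rw [← Ico_add_one_right_eq_Icc]
  exact splitsIntoMSTD_Ico hk (by omega)

theorem stmt10 (k : ℕ) (hk : 5 ≤ k) (hkodd : Odd k) (r : ℤ)
    (hr : 20 * (k : ℤ) - 14 ≤ r) :
    ∃ f : Fin k → Finset ℤ, (∀ i, MSTD (f i)) ∧
      (∀ i j, i ≠ j → Disjoint (f i) (f j)) ∧
      Finset.univ.biUnion f = Finset.Icc 1 r :=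
  stmt10_general k hk r hr
end

section
/- For every integer m ≥ 1, each of the following three sets of integers is MSTD: A = {1,2,3,5} ∪ {6+4i : 0 ≤ i ≤ m} ∪ {9+4m, 10+4m, 11+4m, 13+4m}; B = {1,2,3,5} ∪ {6+4i : 0 ≤ i ≤ m} ∪ {9+4m, 10+4m, 11+4m, 13+4m, 14+4m}; C = {1,2,3,5} ∪ {6+4i : 0 ≤ i ≤ m} ∪ {9+4m, 10+4m, 11+4m}. -/
open Finset Pointwise

/-!
The set `S = {1, 2, 3} ∪ {6, 10, …, 6 + 4m} ∪ {9 + 4m, 10 + 4m, 11 + 4m}` is symmetric about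
`6 + 2m`, so it has as many sums as differences. Adjoining `5` creates no new difference but the new
sum `10`, which gives `C`. Adjoining `13 + 4m` to `C` creates at most the four new differences
`±(11 + 4m), ±(12 + 4m)` and at least the four new sums `18 + 4m, 23 + 8m, 24 + 8m, 26 + 8m`, which
gives `A`. Adjoining `14 + 4m` to `A` creates at most the two new differences `±(13 + 4m)` and at
least the three new sums `25 + 8m, 27 + 8m, 28 + 8m`, which gives `B`.
-/

section AddCommGroup

variable {G : Type*} [AddCommGroup G] [DecidableEq G] {A D T : Finset G} {a c : G}

lemma card_add_self_eq_card_sub_self_of_symmetric (hA : ∀ x ∈ A, c - x ∈ A) :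
    #(A + A) = #(A - A) := by
  have hreflect : {c} - A = A := by
    rw [singleton_sub]
    exact eq_of_subset_of_card_le (image_subset_iff.2 hA)
      (card_image_of_injective A sub_right_injective).ge
  calc #(A + A) = #(A + ({c} - A)) := by rw [hreflect]
    _ = #({c} + (A - A)) := by rw [add_sub_left_comm]
    _ = #(A - A) := card_singleton_add c (A - A)

lemma card_insert_sub_insert_le (hA : A.Nonempty) (hD : ∀ x ∈ A, a - x ∈ A - A ∪ D) :
    #(insert a A - insert a A) ≤ #(A - A) + 2 * #D := by
  have hneg : ∀ x ∈ A, x - a ∈ A - A ∪ -D := fun x hx ↦ by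
    have hax : -(x - a) ∈ A - A ∪ D := by rw [neg_sub]; exact hD x hx
    rw [mem_union, ← mem_neg', ← mem_neg', neg_sub] at hax
    exact mem_union.2 hax
  have hsub : insert a A - insert a A ⊆ A - A ∪ (D ∪ -D) := by
    intro d hd
    obtain ⟨x, hx, y, hy, rfl⟩ := mem_sub.1 hd
    rw [mem_insert] at hx hy
    rcases hx with rfl | hx <;> rcases hy with rfl | hy
    · rw [sub_self]
      exact mem_union_left _ (hA.zero_mem_sub)
    · exact mem_union.2 ((mem_union.1 (hD y hy)).imp_right (mem_union_left _))
    · exact mem_union.2 ((mem_union.1 (hneg x hx)).imp_right (mem_union_right _))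
    · exact mem_union_left _ (sub_mem_sub hx hy)
  calc #(insert a A - insert a A) ≤ #(A - A ∪ (D ∪ -D)) := card_le_card hsub
    _ ≤ #(A - A) + (#D + #(-D)) := (card_union_le _ _).trans (by gcongr; exact card_union_le _ _)
    _ = #(A - A) + 2 * #D := by rw [card_neg, two_mul]

lemma card_add_card_le_card_insert_add_insert (hT : T ⊆ insert a A)
    (hnew : ∀ t ∈ T, a + t ∉ A + A) : #(A + A) + #T ≤ #(insert a A + insert a A) := by
  have hdisj : Disjoint (A + A) ({a} + T) := by
    refine disjoint_right.2 fun s hs ↦ ?_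
    obtain ⟨_, ha, t, ht, rfl⟩ := mem_add.1 hs
    rw [mem_singleton.1 ha]
    exact hnew t ht
  have hsub : A + A ∪ ({a} + T) ⊆ insert a A + insert a A :=
    union_subset (add_subset_add (subset_insert a A) (subset_insert a A))
      (add_subset_add (by simp) hT)
  calc #(A + A) + #T = #(A + A ∪ ({a} + T)) := by
        rw [card_union_of_disjoint hdisj, card_singleton_add]
    _ ≤ #(insert a A + insert a A) := card_le_card hsub

end AddCommGroup

lemma mstd_insert {A D T : Finset ℤ} {a : ℤ} (hA : A.Nonempty)
    (hD : ∀ x ∈ A, a - x ∈ A - A ∪ D) (hT : T ⊆ insert a A) (hnew : ∀ t ∈ T, a + t ∉ A + A)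
    (hcard : #(A - A) + 2 * #D < #(A + A) + #T) : MSTD (insert a A) :=
  calc #(insert a A - insert a A) ≤ #(A - A) + 2 * #D := card_insert_sub_insert_le hA hD
    _ < #(A + A) + #T := hcard
    _ ≤ #(insert a A + insert a A) := card_add_card_le_card_insert_add_insert hT hnew

section Families

variable {m x : ℤ}

/-- The largest subset common to the three sets `A`, `B`, `C` that is symmetric under
`x ↦ 12 + 4m - x`; each of them arises from it by adjoining at most three elements. -/
noncomputable def symmetricCore (m : ℤ) : Finset ℤ :=
  {1, 2, 3} ∪ (Icc 0 m).image (fun i ↦ 6 + 4 * i) ∪ {9 + 4 * m, 10 + 4 * m, 11 + 4 * m}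

lemma mem_symmetricCore : x ∈ symmetricCore m ↔ x = 1 ∨ x = 2 ∨ x = 3 ∨
    (x % 4 = 2 ∧ 6 ≤ x ∧ x ≤ 6 + 4 * m) ∨ x = 9 + 4 * m ∨ x = 10 + 4 * m ∨ x = 11 + 4 * m := by
  have hmiddle : x ∈ (Icc 0 m).image (fun i ↦ 6 + 4 * i) ↔
      x % 4 = 2 ∧ 6 ≤ x ∧ x ≤ 6 + 4 * m := by
    simp only [mem_image, mem_Icc]
    exact ⟨by rintro ⟨i, hi, rfl⟩; omega, fun hx ↦ ⟨(x - 6) / 4, by omega, by omega⟩⟩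
  simp only [symmetricCore, mem_union, hmiddle, mem_insert, mem_singleton, or_assoc]

lemma card_add_symmetricCore_eq_card_sub (m : ℤ) :
    #(symmetricCore m + symmetricCore m) = #(symmetricCore m - symmetricCore m) :=
  card_add_self_eq_card_sub_self_of_symmetric (c := 12 + 4 * m) fun x hx ↦ by
    rw [mem_symmetricCore] at hx ⊢
    omega

lemma mstd_insert_five_symmetricCore (hm : 1 ≤ m) : MSTD (insert 5 (symmetricCore m)) := by
  refine mstd_insert (D := ∅) (T := {5}) ⟨1, by simp [mem_symmetricCore]⟩ ?_ (by simp) ?_ ?_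
  · intro x hx
    simp only [union_empty, mem_sub, mem_symmetricCore] at hx ⊢
    rcases hx with rfl | rfl | rfl | hx | rfl | rfl | rfl
    · exact ⟨6, by omega, 2, by omega, by omega⟩
    · exact ⟨6, by omega, 3, by omega, by omega⟩
    · exact ⟨3, by omega, 1, by omega, by omega⟩
    · exact ⟨1, by omega, x - 4, by omega, by omega⟩
    · exact ⟨2, by omega, 6 + 4 * m, by omega, by omega⟩
    · exact ⟨1, by omega, 6 + 4 * m, by omega, by omega⟩
    · exact ⟨3, by omega, 9 + 4 * m, by omega, by omega⟩
  · simp only [mem_singleton, forall_eq, mem_add, mem_symmetricCore]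
    rintro ⟨y, hy, z, hz, hyz⟩
    omega
  · simp [card_add_symmetricCore_eq_card_sub]

lemma mstd_insert_thirteen_add (hm : 1 ≤ m) :
    MSTD (insert (13 + 4 * m) (insert 5 (symmetricCore m))) := by
  have hbase : MSTD (insert 5 (symmetricCore m)) := mstd_insert_five_symmetricCore hm
  refine mstd_insert (D := {11 + 4 * m, 12 + 4 * m})
    (T := {5, 10 + 4 * m, 11 + 4 * m, 13 + 4 * m}) (insert_nonempty _ _) ?_ ?_ ?_ ?_
  · intro x hx
    simp only [mem_union, mem_sub, mem_insert, mem_singleton, mem_symmetricCore] at hx ⊢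
    rcases hx with rfl | rfl | rfl | rfl | hx | rfl | rfl | rfl
    · exact .inl ⟨10 + 4 * m, by omega, 2, by omega, by omega⟩
    · exact .inr (by omega)
    · exact .inr (by omega)
    · exact .inl ⟨11 + 4 * m, by omega, 1, by omega, by omega⟩
    · exact .inl ⟨9 + 4 * m, by omega, x - 4, by omega, by omega⟩
    · exact .inl ⟨5, by omega, 1, by omega, by omega⟩
    · exact .inl ⟨5, by omega, 2, by omega, by omega⟩
    · exact .inl ⟨3, by omega, 1, by omega, by omega⟩
  · intro t ht
    simp only [mem_insert, mem_singleton, mem_symmetricCore] at ht ⊢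
    omega
  · intro t ht
    simp only [mem_add, mem_insert, mem_singleton, mem_symmetricCore] at ht ⊢
    rintro ⟨y, hy, z, hz, hyz⟩
    omega
  · have hD : #{11 + 4 * m, 12 + 4 * m} ≤ 2 := card_le_two
    have hT : #{5, 10 + 4 * m, 11 + 4 * m, 13 + 4 * m} = 4 := by grind
    unfold MSTD at hbase
    omega

lemma mstd_insert_fourteen_add (hm : 1 ≤ m) :
    MSTD (insert (14 + 4 * m) (insert (13 + 4 * m) (insert 5 (symmetricCore m)))) := by
  have hbase : MSTD (insert (13 + 4 * m) (insert 5 (symmetricCore m))) :=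
    mstd_insert_thirteen_add hm
  refine mstd_insert (D := {13 + 4 * m}) (T := {11 + 4 * m, 13 + 4 * m, 14 + 4 * m})
    (insert_nonempty _ _) ?_ ?_ ?_ ?_
  · intro x hx
    simp only [mem_union, mem_sub, mem_insert, mem_singleton, mem_symmetricCore] at hx ⊢
    rcases hx with rfl | rfl | rfl | rfl | rfl | hx | rfl | rfl | rfl
    · exact .inl ⟨3, by omega, 2, by omega, by omega⟩
    · exact .inl ⟨10 + 4 * m, by omega, 1, by omega, by omega⟩
    · exact .inr (by omega)
    · exact .inl ⟨13 + 4 * m, by omega, 1, by omega, by omega⟩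
    · exact .inl ⟨13 + 4 * m, by omega, 2, by omega, by omega⟩
    · exact .inl ⟨10 + 4 * m, by omega, x - 4, by omega, by omega⟩
    · exact .inl ⟨6, by omega, 1, by omega, by omega⟩
    · exact .inl ⟨5, by omega, 1, by omega, by omega⟩
    · exact .inl ⟨5, by omega, 2, by omega, by omega⟩
  · intro t ht
    simp only [mem_insert, mem_singleton, mem_symmetricCore] at ht ⊢
    omega
  · intro t ht
    simp only [mem_add, mem_insert, mem_singleton, mem_symmetricCore] at ht ⊢
    rintro ⟨y, hy, z, hz, hyz⟩
    omega
  · have hT : #{11 + 4 * m, 13 + 4 * m, 14 + 4 * m} = 3 := by grind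
    have hD : #{13 + 4 * m} = 1 := card_singleton _
    unfold MSTD at hbase
    omega

end Families

theorem stmt13 (m : ℤ) (hm : 1 ≤ m) :
    MSTD (({1, 2, 3, 5} : Finset ℤ) ∪ (Finset.Icc 0 m).image (fun i => 6 + 4 * i)
        ∪ {9 + 4 * m, 10 + 4 * m, 11 + 4 * m, 13 + 4 * m}) ∧
    MSTD (({1, 2, 3, 5} : Finset ℤ) ∪ (Finset.Icc 0 m).image (fun i => 6 + 4 * i)
        ∪ {9 + 4 * m, 10 + 4 * m, 11 + 4 * m, 13 + 4 * m, 14 + 4 * m}) ∧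
    MSTD (({1, 2, 3, 5} : Finset ℤ) ∪ (Finset.Icc 0 m).image (fun i => 6 + 4 * i)
        ∪ {9 + 4 * m, 10 + 4 * m, 11 + 4 * m}) := by
  refine ⟨?_, ?_, ?_⟩
  · convert mstd_insert_thirteen_add hm using 1
    grind [symmetricCore]
  · convert mstd_insert_fourteen_add hm using 1
    grind [symmetricCore]
  · convert mstd_insert_five_symmetricCore hm using 1
    grind [symmetricCore]
end

section
/- For every integer m ≥ 1, let S = {0,1,2,4} ∪ {5+4i : 0 ≤ i ≤ m} ∪ {8+4m, 9+4m, 10+4m, 12+4m}. Then for every integer ℓ with 0 ≤ ℓ ≤ m−1, the number 6+4ℓ does not belong to S − S; that is, (S−S) ∩ {6+4ℓ : 0 ≤ ℓ ≤ m−1} = ∅. -/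
open Finset Pointwise

/-! All odd elements of `S` are `1` modulo `4`, so a difference that is `2` modulo `4` comes from
two even elements. The even elements lie in the two short intervals `[0, 4]` and
`[8 + 4m, 12 + 4m]`, so their differences are at most `4` or at least `4 + 4m`, whereas
`6 ≤ 6 + 4ℓ ≤ 2 + 4m`. -/

theorem sub_le_or_le_sub_of_mem_Icc_union_Icc {α : Type*} [AddCommGroup α] [Preorder α]
    [IsOrderedAddMonoid α] {a b w x y : α} (hab : a ≤ b)
    (hx : x ∈ Set.Icc a (a + w) ∪ Set.Icc b (b + w))
    (hy : y ∈ Set.Icc a (a + w) ∪ Set.Icc b (b + w)) :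
    x - y ≤ w ∨ b - (a + w) ≤ x - y := by
  rcases hx with ⟨-, hxa⟩ | ⟨hbx, hxb⟩
  · have hay : a ≤ y := hy.elim And.left fun h => hab.trans h.1
    exact .inl (sub_le_iff_le_add'.2 (hxa.trans (by gcongr)))
  · rcases hy with ⟨-, hya⟩ | ⟨hby, -⟩
    · exact .inr (sub_le_sub hbx hya)
    · exact .inl (sub_le_iff_le_add'.2 (hxb.trans (by gcongr)))

theorem even_and_even_of_even_sub_of_not_dvd {n r x y : ℤ} (hx : Odd x → x ≡ r [ZMOD n])
    (hy : Odd y → y ≡ r [ZMOD n]) (heven : Even (x - y)) (hn : ¬ n ∣ x - y) :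
    Even x ∧ Even y := by
  have hxy : Even x ↔ Even y := Int.even_sub.1 heven
  suffices h : Even x from ⟨h, hxy.1 h⟩
  by_contra hx'
  have hx_odd : Odd x := Int.not_even_iff_odd.1 hx'
  have hy_odd : Odd y := Int.not_even_iff_odd.1 (hxy.not.1 hx')
  exact hn ((hy hy_odd).trans (hx hx_odd).symm).dvd

theorem le_or_sub_le_of_mem_sub_of_even_of_not_dvd {A : Set ℤ} {n r a b w d : ℤ} (hab : a ≤ b)
    (hodd : ∀ x ∈ A, Odd x → x ≡ r [ZMOD n])
    (heven : ∀ x ∈ A, Even x → x ∈ Set.Icc a (a + w) ∪ Set.Icc b (b + w))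
    (hd : d ∈ A - A) (hd_even : Even d) (hnd : ¬ n ∣ d) :
    d ≤ w ∨ b - (a + w) ≤ d := by
  obtain ⟨x, hx, y, hy, rfl⟩ := Set.mem_sub.1 hd
  obtain ⟨hx_even, hy_even⟩ :=
    even_and_even_of_even_sub_of_not_dvd (hodd x hx) (hodd y hy) hd_even hnd
  exact sub_le_or_le_sub_of_mem_Icc_union_Icc hab (heven x hx hx_even) (heven y hy hy_even)

/-- The set `S` of the theorem as a function of `m`: two clusters of diameter `4`, joined by an
arithmetic progression with common difference `4`. -/
noncomputable def twoClusterSet (m : ℤ) : Finset ℤ :=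
  {0, 1, 2, 4} ∪ (Finset.Icc 0 m).image (fun i => 5 + 4 * i)
    ∪ {8 + 4 * m, 9 + 4 * m, 10 + 4 * m, 12 + 4 * m}

namespace twoClusterSet

variable {m x : ℤ}

theorem mem_iff : x ∈ twoClusterSet m ↔
    (x = 0 ∨ x = 1 ∨ x = 2 ∨ x = 4) ∨ (∃ i, (0 ≤ i ∧ i ≤ m) ∧ 5 + 4 * i = x) ∨
      (x = 8 + 4 * m ∨ x = 9 + 4 * m ∨ x = 10 + 4 * m ∨ x = 12 + 4 * m) := by
  simp only [twoClusterSet, mem_union, mem_insert, mem_singleton, mem_image, mem_Icc, or_assoc]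

theorem modEq_one_of_odd (hx : x ∈ twoClusterSet m) (hx_odd : Odd x) : x ≡ 1 [ZMOD 4] := by
  rw [Int.odd_iff] at hx_odd
  rw [Int.ModEq]
  rcases mem_iff.1 hx with h | ⟨i, -, h⟩ | h <;> omega

theorem mem_Icc_union_Icc_of_even (hx : x ∈ twoClusterSet m) (hx_even : Even x) :
    x ∈ Set.Icc 0 (0 + 4) ∪ Set.Icc (8 + 4 * m) (8 + 4 * m + 4) := by
  rw [Int.even_iff] at hx_even
  simp only [Set.mem_union, Set.mem_Icc]
  rcases mem_iff.1 hx with h | ⟨i, -, h⟩ | h <;> omega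

theorem le_four_or_le_of_mem_sub {d : ℤ} (hm : -2 ≤ m)
    (hd : d ∈ twoClusterSet m - twoClusterSet m) (hd_mod : d % 4 = 2) :
    d ≤ 4 ∨ 4 + 4 * m ≤ d := by
  have hd' : d ∈ (twoClusterSet m - twoClusterSet m : Set ℤ) := by
    exact_mod_cast hd
  have hstart : 0 ≤ 8 + 4 * m := by omega
  have hgap := le_or_sub_le_of_mem_sub_of_even_of_not_dvd hstart (fun _ => modEq_one_of_odd)
    (fun _ => mem_Icc_union_Icc_of_even) hd' (Int.even_iff.2 (by omega)) (by omega)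
  omega

end twoClusterSet

theorem stmt14 (m : ℤ) (hm : 1 ≤ m) (S : Finset ℤ)
    (hS : S = ({0, 1, 2, 4} : Finset ℤ) ∪ (Finset.Icc 0 m).image (fun i => 5 + 4 * i)
        ∪ {8 + 4 * m, 9 + 4 * m, 10 + 4 * m, 12 + 4 * m}) :
    ∀ ℓ : ℤ, 0 ≤ ℓ → ℓ ≤ m - 1 → 6 + 4 * ℓ ∉ S - S := by
  intro ℓ hℓ_nonneg hℓ_le hmem
  change S = twoClusterSet m at hS
  subst hS
  have hgap : 6 + 4 * ℓ ≤ 4 ∨ 4 + 4 * m ≤ 6 + 4 * ℓ :=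
    twoClusterSet.le_four_or_le_of_mem_sub (by omega) hmem (by omega)
  omega
end

section
/- Fix an integer ℓ ≥ 1 and subsets L ⊆ [0, ℓ−1] and R_0 ⊆ [0, ℓ−1]. For every ε > 0 there exists r_0 such that for all integers r ≥ r_0 the following holds: writing R = {(r−ℓ) + x : x ∈ R_0}, the number of subsets M of [ℓ, r−ℓ−1] for which the set S = L ∪ M ∪ R satisfies [2ℓ−1, 2r−2ℓ−1] ⊆ S + S is at least (1 − 6(2^{−|L|} + 2^{−|R_0|}) − ε) · 2^{r−2ℓ}. -/
/-!
Let `I = [l, r-l-1]` and let `R ⊆ [r-l, r-1]` be the right fringe. By the union bound it suffices to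
estimate, for each target `k`, the proportion of the sets `M ⊆ I` for which `k` is not a sum of two
elements of `L ∪ M ∪ R`. For a fringe `A` disjoint from `I`, the condition that `k` is not a sum of
two elements of `A ∪ M` decouples over the orbits of the reflection `x ↦ k - x`: the points `k - a`
with `a ∈ A` are forbidden, and `M` contains no whole orbit. If all of `k - A` lies in `I` and `n`
points of `I` are reflected into `I`, the proportion is therefore at most
`2 ^ (-|A|) * (3 ^ (n / 2) / 2 ^ n)`, where `n / 2` is rounded down.

The numbers `3 ^ (n / 2) / 2 ^ n` sum to `6`. For the targets `k < r - l`, only the fringe `L`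
is used, and distinct targets have distinct values of `n`; hence they contribute at most
`6 * 2 ^ (-|L|)`. Likewise the targets `k > r + l - 2` contribute at most `6 * 2 ^ (-|R|)`. For the
remaining `2 * l - 1` targets no fringe is needed, because `n > r - 3 * l` and
`3 ^ (n / 2) / 2 ^ n` tends to `0`.
-/

open Finset Pointwise

lemma sum_Ico_eq_sum_Ico_add_sum_Ico {α β : Type*} [LinearOrder α] [LocallyFiniteOrder α]
    [AddCommMonoid β] (f : α → β) {a b c : α} (hab : a ≤ b) (hbc : b ≤ c) :
    ∑ k ∈ Ico a c, f k = ∑ k ∈ Ico a b, f k + ∑ k ∈ Ico b c, f k := by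
  rw [← Ico_union_Ico_eq_Ico hab hbc, sum_union (Ico_disjoint_Ico_consecutive a b c)]

section Density

/-- The largest possible proportion, among the subsets of an `n`-element set stable under a
reflection `x ↦ k - x`, of those in which no two (possibly equal) elements have sum `k`. It is
attained when the reflection has at most one fixed point; `n / 2` is rounded down. -/
noncomputable def pairFreeDensity (n : ℕ) : ℝ := 3 ^ (n / 2) / 2 ^ n

lemma pairFreeDensity_nonneg (n : ℕ) : 0 ≤ pairFreeDensity n := by
  unfold pairFreeDensity
  positivity

lemma pairFreeDensity_two_mul (i : ℕ) : pairFreeDensity (2 * i) = (3 / 4) ^ i := by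
  rw [pairFreeDensity, Nat.mul_div_cancel_left i two_pos, pow_mul, div_pow]
  norm_num

lemma pairFreeDensity_two_mul_add_one (i : ℕ) :
    pairFreeDensity (2 * i + 1) = (3 / 4) ^ i / 2 := by
  have hdiv : (2 * i + 1) / 2 = i := by omega
  rw [pairFreeDensity, hdiv, pow_succ, pow_mul, div_pow, div_div]
  norm_num

lemma hasSum_pairFreeDensity : HasSum pairFreeDensity 6 := by
  have hgeom : HasSum (fun i : ℕ => (3 / 4 : ℝ) ^ i) 4 := by
    convert hasSum_geometric_of_lt_one (r := (3 / 4 : ℝ)) (by norm_num) (by norm_num) using 1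
    norm_num
  convert HasSum.even_add_odd (f := pairFreeDensity) (m := 4) (m' := 4 / 2) ?_ ?_ using 1
  · norm_num
  · simpa only [pairFreeDensity_two_mul] using hgeom
  · simpa only [pairFreeDensity_two_mul_add_one] using hgeom.div_const 2

lemma sum_pairFreeDensity_le_of_injOn {ι : Type*} {K : Finset ι} {f : ι → ℕ}
    (hf : Set.InjOn f K) : ∑ k ∈ K, pairFreeDensity (f k) ≤ 6 := by
  rw [← sum_image hf]
  exact sum_le_hasSum _ (fun n _ => pairFreeDensity_nonneg n) hasSum_pairFreeDensity

lemma pairFreeDensity_le (n : ℕ) : pairFreeDensity n ≤ (3 / 4) ^ (n / 2) := by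
  obtain ⟨i, rfl | rfl⟩ := n.even_or_odd'
  · rw [pairFreeDensity_two_mul, Nat.mul_div_cancel_left i two_pos]
  · have hdiv : (2 * i + 1) / 2 = i := by omega
    rw [pairFreeDensity_two_mul_add_one, hdiv]
    exact half_le_self (by positivity)

end Density

section Add

variable {G : Type*} [Add G] [DecidableEq G]

/-- The sets `M ⊆ I` for which `k` is not a sum of two (possibly equal) elements of `A ∪ M`; the
fixed set `A` plays the role of the fringe. -/
def sumAvoiding (A I : Finset G) (k : G) : Finset (Finset G) :=
  {M ∈ I.powerset | k ∉ (A ∪ M) + (A ∪ M)}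

lemma mem_sumAvoiding {A I M : Finset G} {k : G} :
    M ∈ sumAvoiding A I k ↔ M ⊆ I ∧ k ∉ (A ∪ M) + (A ∪ M) := by
  rw [sumAvoiding, mem_filter, mem_powerset]

lemma add_ne_of_mem_sumAvoiding {A I M : Finset G} {k x y : G} (hM : M ∈ sumAvoiding A I k)
    (hx : x ∈ A ∪ M) (hy : y ∈ A ∪ M) : x + y ≠ k :=
  fun h => (mem_sumAvoiding.1 hM).2 (h ▸ add_mem_add hx hy)

lemma sumAvoiding_anti_left {A B : Finset G} (hAB : A ⊆ B) (I : Finset G) (k : G) :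
    sumAvoiding B I k ⊆ sumAvoiding A I k := by
  intro M hM
  rw [mem_sumAvoiding] at hM ⊢
  exact hM.imp_right fun h hk =>
    h (add_subset_add (union_subset_union_left hAB) (union_subset_union_left hAB) hk)

lemma inter_mem_sumAvoiding {A I M : Finset G} {k : G} (hM : M ∈ sumAvoiding A I k)
    (P : Finset G) : M ∩ P ∈ sumAvoiding A P k := by
  have hsub : A ∪ M ∩ P ⊆ A ∪ M := union_subset_union_right inter_subset_left
  exact mem_sumAvoiding.2
    ⟨inter_subset_right, fun hk => (mem_sumAvoiding.1 hM).2 (add_subset_add hsub hsub hk)⟩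

lemma card_sumAvoiding_le_two_pow (A I : Finset G) (k : G) : #(sumAvoiding A I k) ≤ 2 ^ #I :=
  (card_filter_le _ _).trans_eq (card_powerset I)

lemma card_sumAvoiding_union_le (A P Q : Finset G) (k : G) :
    #(sumAvoiding A (P ∪ Q) k) ≤ #(sumAvoiding A P k) * #(sumAvoiding A Q k) := by
  rw [← card_product]
  refine card_le_card_of_injOn (fun M => (M ∩ P, M ∩ Q)) ?_ ?_
  · intro M hM
    exact mem_product.2 ⟨inter_mem_sumAvoiding hM P, inter_mem_sumAvoiding hM Q⟩
  · intro M hM N hN hMN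
    obtain ⟨hP, hQ⟩ := Prod.mk.inj hMN
    calc M = M ∩ P ∪ M ∩ Q := by
          rw [← inter_union_distrib_left, inter_eq_left.2 (mem_sumAvoiding.1 hM).1]
      _ = N ∩ P ∪ N ∩ Q := by rw [hP, hQ]
      _ = N := by rw [← inter_union_distrib_left, inter_eq_left.2 (mem_sumAvoiding.1 hN).1]

lemma two_pow_card_le_card_add_sum_card_sumAvoiding (A I K : Finset G) :
    2 ^ #I ≤ #{M ∈ I.powerset | K ⊆ (A ∪ M) + (A ∪ M)} + ∑ k ∈ K, #(sumAvoiding A I k) := by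
  have hcover : {M ∈ I.powerset | ¬ K ⊆ (A ∪ M) + (A ∪ M)} ⊆ K.biUnion (sumAvoiding A I) := by
    intro M hM
    obtain ⟨hMI, hK⟩ := mem_filter.1 hM
    obtain ⟨k, hk, hkM⟩ := not_subset.1 hK
    exact mem_biUnion.2 ⟨k, hk, mem_sumAvoiding.2 ⟨mem_powerset.1 hMI, hkM⟩⟩
  rw [← card_powerset, ← card_filter_add_card_filter_not (fun M => K ⊆ (A ∪ M) + (A ∪ M))]
  gcongr
  exact (card_le_card hcover).trans card_biUnion_le

end Add

section AddCommGroup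

variable {G : Type*} [AddCommGroup G] [DecidableEq G]

lemma card_sumAvoiding_image_sub_le_one (A : Finset G) (k : G) :
    #(sumAvoiding A (A.image (k - ·)) k) ≤ 1 := by
  suffices ∀ M ∈ sumAvoiding A (A.image (k - ·)) k, M = ∅ from
    card_le_one.2 fun M hM N hN => (this M hM).trans (this N hN).symm
  refine fun M hM => eq_empty_of_forall_notMem fun x hx => ?_
  obtain ⟨a, ha, rfl⟩ := mem_image.1 ((mem_sumAvoiding.1 hM).1 hx)
  exact add_ne_of_mem_sumAvoiding hM (mem_union_left _ ha) (mem_union_right _ hx)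
    (add_sub_cancel a k)

lemma card_sumAvoiding_pair_le (A : Finset G) (x k : G) :
    #(sumAvoiding A {x, k - x} k) ≤ 3 ^ (#{x, k - x} / 2) := by
  have hproper : sumAvoiding A {x, k - x} k ⊆ ({x, k - x} : Finset G).ssubsets := by
    intro M hM
    refine mem_ssubsets.2 ((mem_sumAvoiding.1 hM).1.ssubset_of_ne ?_)
    rintro rfl
    exact add_ne_of_mem_sumAvoiding hM (mem_union_right _ (by simp)) (mem_union_right _ (by simp))
      (add_sub_cancel x k)
  have hcard : #(sumAvoiding A {x, k - x} k) ≤ 2 ^ #{x, k - x} - 1 := by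
    rw [← card_powerset, ← card_erase_of_mem (mem_powerset_self _)]
    exact card_le_card hproper
  obtain hx | hx := eq_or_ne x (k - x)
  · rwa [← hx, pair_eq_singleton, card_singleton] at hcard ⊢
  · rwa [card_pair hx] at hcard ⊢

lemma card_sumAvoiding_le_of_forall_sub_mem (A : Finset G) {J : Finset G} {k : G}
    (hJ : ∀ x ∈ J, k - x ∈ J) : #(sumAvoiding A J k) ≤ 3 ^ (#J / 2) := by
  induction J using Finset.strongInduction with
  | H J ih =>
    obtain rfl | ⟨x, hx⟩ := J.eq_empty_or_nonempty
    · simpa using card_sumAvoiding_le_two_pow A ∅ k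
    have hpair : {x, k - x} ⊆ J := by simp [insert_subset_iff, hx, hJ x hx]
    have hrest : ∀ y ∈ J \ {x, k - x}, k - y ∈ J \ {x, k - x} := by
      intro y hy
      simp only [mem_sdiff, mem_insert, mem_singleton, not_or] at hy ⊢
      exact ⟨hJ y hy.1, fun h => hy.2.2 (by rw [← h, sub_sub_cancel]),
        fun h => hy.2.1 (sub_right_injective h)⟩
    have hlt : J \ {x, k - x} ⊂ J := sdiff_ssubset hpair (insert_nonempty _ _)
    calc #(sumAvoiding A J k)
        ≤ #(sumAvoiding A {x, k - x} k) * #(sumAvoiding A (J \ {x, k - x}) k) := by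
          conv_lhs => rw [← union_sdiff_of_subset hpair]
          exact card_sumAvoiding_union_le ..
      _ ≤ 3 ^ (#{x, k - x} / 2) * 3 ^ (#(J \ {x, k - x}) / 2) :=
          Nat.mul_le_mul (card_sumAvoiding_pair_le A x k) (ih _ hlt hrest)
      _ = 3 ^ (#{x, k - x} / 2 + #(J \ {x, k - x}) / 2) := (pow_add ..).symm
      _ ≤ 3 ^ (#J / 2) := by
          have := card_sdiff_add_card_eq_card hpair
          exact Nat.pow_le_pow_right (by norm_num) (by omega)

/-- The part of `I` that the reflection `x ↦ k - x` maps into `I`. Its elements are exactly those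
occurring in a representation of `k` as a sum of two elements of `I`. -/
def pairedPart (I : Finset G) (k : G) : Finset G := {x ∈ I | k - x ∈ I}

lemma mem_pairedPart {I : Finset G} {k x : G} : x ∈ pairedPart I k ↔ x ∈ I ∧ k - x ∈ I :=
  mem_filter

lemma sub_mem_pairedPart {I : Finset G} {k x : G} (hx : x ∈ pairedPart I k) :
    k - x ∈ pairedPart I k := by
  rw [mem_pairedPart] at hx ⊢
  exact ⟨hx.2, by simpa only [sub_sub_cancel] using hx.1⟩

lemma disjoint_image_sub_pairedPart {A I : Finset G} (hAI : Disjoint A I) (k : G) :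
    Disjoint (A.image (k - ·)) (pairedPart I k) := by
  rw [disjoint_left]
  intro x hx hxI
  obtain ⟨a, ha, rfl⟩ := mem_image.1 hx
  have haI : a ∈ I := by simpa only [sub_sub_cancel] using (mem_pairedPart.1 hxI).2
  exact disjoint_left.1 hAI ha haI

lemma card_sumAvoiding_le {A I : Finset G} {k : G} (hAI : Disjoint A I)
    (hk : ∀ a ∈ A, k - a ∈ I) :
    (#(sumAvoiding A I k) : ℝ) ≤
      2 ^ #I * (2 ^ (-(#A : ℤ)) * pairFreeDensity #(pairedPart I k)) := by
  set T := A.image (k - ·) with hT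
  set J := pairedPart I k
  have hTJ : T ∪ J ⊆ I := union_subset (image_subset_iff.2 hk) (filter_subset _ _)
  have hcard : #I = #A + #J + #(I \ (T ∪ J)) := by
    rw [← card_image_of_injective A (sub_right_injective (b := k)), ← hT,
      ← card_union_of_disjoint (disjoint_image_sub_pairedPart hAI k), add_comm,
      card_sdiff_add_card_eq_card hTJ]
  have hcount : #(sumAvoiding A I k) ≤ 3 ^ (#J / 2) * 2 ^ #(I \ (T ∪ J)) :=
    calc #(sumAvoiding A I k)
        ≤ #(sumAvoiding A (T ∪ J) k) * #(sumAvoiding A (I \ (T ∪ J)) k) := by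
          conv_lhs => rw [← union_sdiff_of_subset hTJ]
          exact card_sumAvoiding_union_le ..
      _ ≤ #(sumAvoiding A T k) * #(sumAvoiding A J k) * #(sumAvoiding A (I \ (T ∪ J)) k) :=
          Nat.mul_le_mul_right _ (card_sumAvoiding_union_le ..)
      _ ≤ 1 * 3 ^ (#J / 2) * 2 ^ #(I \ (T ∪ J)) := by
          gcongr
          · exact card_sumAvoiding_image_sub_le_one A k
          · exact card_sumAvoiding_le_of_forall_sub_mem A fun _ => sub_mem_pairedPart
          · exact card_sumAvoiding_le_two_pow ..
      _ = 3 ^ (#J / 2) * 2 ^ #(I \ (T ∪ J)) := by rw [one_mul]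
  calc (#(sumAvoiding A I k) : ℝ) ≤ 3 ^ (#J / 2) * 2 ^ #(I \ (T ∪ J)) := mod_cast hcount
    _ = 2 ^ #I * (2 ^ (-(#A : ℤ)) * pairFreeDensity #J) := by
        rw [hcard, pairFreeDensity, zpow_neg, zpow_natCast, pow_add, pow_add]
        field_simp

lemma sum_card_sumAvoiding_le_of_injOn {A I K : Finset G} (hAI : Disjoint A I)
    (hK : ∀ k ∈ K, ∀ a ∈ A, k - a ∈ I) (hinj : Set.InjOn (fun k => #(pairedPart I k)) K) :
    ∑ k ∈ K, (#(sumAvoiding A I k) : ℝ) ≤ 2 ^ #I * (6 * 2 ^ (-(#A : ℤ))) :=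
  calc ∑ k ∈ K, (#(sumAvoiding A I k) : ℝ)
      ≤ ∑ k ∈ K, 2 ^ #I * (2 ^ (-(#A : ℤ)) * pairFreeDensity #(pairedPart I k)) :=
        sum_le_sum fun k hk => card_sumAvoiding_le hAI (hK k hk)
    _ = 2 ^ #I * ((∑ k ∈ K, pairFreeDensity #(pairedPart I k)) * 2 ^ (-(#A : ℤ))) := by
        rw [← mul_sum, ← mul_sum, mul_comm (2 ^ (-(#A : ℤ)) : ℝ)]
    _ ≤ 2 ^ #I * (6 * 2 ^ (-(#A : ℤ))) := by
        gcongr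
        exact sum_pairFreeDensity_le_of_injOn hinj

lemma card_sumAvoiding_le_of_le_card_pairedPart (A : Finset G) {I : Finset G} {k : G} {m : ℕ}
    (hm : m ≤ #(pairedPart I k)) :
    (#(sumAvoiding A I k) : ℝ) ≤ 2 ^ #I * (3 / 4) ^ (m / 2) :=
  calc (#(sumAvoiding A I k) : ℝ)
      ≤ #(sumAvoiding ∅ I k) := mod_cast card_le_card (sumAvoiding_anti_left (empty_subset A) I k)
    _ ≤ 2 ^ #I * pairFreeDensity #(pairedPart I k) := by
        simpa using card_sumAvoiding_le (k := k) (disjoint_empty_left I) (by simp)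
    _ ≤ 2 ^ #I * (3 / 4) ^ (#(pairedPart I k) / 2) := by
        gcongr
        exact pairFreeDensity_le _
    _ ≤ 2 ^ #I * (3 / 4) ^ (m / 2) := by
        gcongr 2 ^ #I * ?_
        exact pow_le_pow_of_le_one (by norm_num) (by norm_num) (Nat.div_le_div_right hm)

end AddCommGroup

section Int

lemma card_pairedPart_Icc (u v k : ℤ) :
    #(pairedPart (Icc u v) k) = (min v (k - u) + 1 - max u (k - v)).toNat := by
  have hIcc : pairedPart (Icc u v) k = Icc (max u (k - v)) (min v (k - u)) := by
    ext x
    simp only [mem_pairedPart, mem_Icc]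
    omega
  rw [hIcc, Int.card_Icc]

variable {l r : ℤ} {L R : Finset ℤ}

lemma sum_card_sumAvoiding_left_le (hl : 1 ≤ l) (hL : L ⊆ Icc 0 (l - 1)) :
    ∑ k ∈ Ico (2 * l - 1) (r - l), (#(sumAvoiding L (Icc l (r - l - 1)) k) : ℝ) ≤
      2 ^ #(Icc l (r - l - 1)) * (6 * 2 ^ (-(#L : ℤ))) := by
  refine sum_card_sumAvoiding_le_of_injOn (disjoint_left.2 fun a ha => ?_) (fun k hk a ha => ?_)
    fun k hk k' hk' h => ?_
  · have := mem_Icc.1 (hL ha)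
    rw [mem_Icc]
    omega
  · have := mem_Icc.1 (hL ha)
    rw [mem_Ico] at hk
    rw [mem_Icc]
    omega
  · simp only [card_pairedPart_Icc, coe_Ico, Set.mem_Ico] at h hk hk'
    omega

lemma sum_card_sumAvoiding_right_le (hl : 1 ≤ l) (hR : R ⊆ Icc (r - l) (r - 1)) :
    ∑ k ∈ Ico (r + l - 1) (2 * r - 2 * l), (#(sumAvoiding R (Icc l (r - l - 1)) k) : ℝ) ≤
      2 ^ #(Icc l (r - l - 1)) * (6 * 2 ^ (-(#R : ℤ))) := by
  refine sum_card_sumAvoiding_le_of_injOn (disjoint_left.2 fun a ha => ?_) (fun k hk a ha => ?_)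
    fun k hk k' hk' h => ?_
  · have := mem_Icc.1 (hR ha)
    rw [mem_Icc]
    omega
  · have := mem_Icc.1 (hR ha)
    rw [mem_Ico] at hk
    rw [mem_Icc]
    omega
  · simp only [card_pairedPart_Icc, coe_Ico, Set.mem_Ico] at h hk hk'
    omega

lemma sum_card_sumAvoiding_middle_le (hl : 1 ≤ l) (A : Finset ℤ) :
    ∑ k ∈ Ico (r - l) (r + l - 1), (#(sumAvoiding A (Icc l (r - l - 1)) k) : ℝ) ≤
      2 ^ #(Icc l (r - l - 1)) * (2 * l * (3 / 4) ^ ((r - 3 * l).toNat / 2)) := by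
  have hterm : ∀ k ∈ Ico (r - l) (r + l - 1), (#(sumAvoiding A (Icc l (r - l - 1)) k) : ℝ) ≤
      2 ^ #(Icc l (r - l - 1)) * (3 / 4) ^ ((r - 3 * l).toNat / 2) := by
    intro k hk
    refine card_sumAvoiding_le_of_le_card_pairedPart A ?_
    rw [mem_Ico] at hk
    rw [card_pairedPart_Icc]
    omega
  have hcard : (#(Ico (r - l) (r + l - 1)) : ℝ) ≤ 2 * l := by
    have : (#(Ico (r - l) (r + l - 1)) : ℤ) ≤ 2 * l := by
      rw [Int.card_Ico]
      omega
    exact_mod_cast this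
  calc ∑ k ∈ Ico (r - l) (r + l - 1), (#(sumAvoiding A (Icc l (r - l - 1)) k) : ℝ)
      ≤ #(Ico (r - l) (r + l - 1)) *
          (2 ^ #(Icc l (r - l - 1)) * (3 / 4) ^ ((r - 3 * l).toNat / 2)) := by
        simpa only [nsmul_eq_mul] using sum_le_card_nsmul _ _ _ hterm
    _ ≤ 2 * l * (2 ^ #(Icc l (r - l - 1)) * (3 / 4) ^ ((r - 3 * l).toNat / 2)) := by gcongr
    _ = 2 ^ #(Icc l (r - l - 1)) * (2 * l * (3 / 4) ^ ((r - 3 * l).toNat / 2)) := by ring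

lemma sum_card_sumAvoiding_union_le (hl : 1 ≤ l) (hr : 3 * l ≤ r) (hL : L ⊆ Icc 0 (l - 1))
    (hR : R ⊆ Icc (r - l) (r - 1)) :
    ∑ k ∈ Icc (2 * l - 1) (2 * r - 2 * l - 1),
        (#(sumAvoiding (L ∪ R) (Icc l (r - l - 1)) k) : ℝ) ≤
      2 ^ #(Icc l (r - l - 1)) * (6 * (2 ^ (-(#L : ℤ)) + 2 ^ (-(#R : ℤ))) +
        2 * l * (3 / 4) ^ ((r - 3 * l).toNat / 2)) := by
  have hIcc : Icc (2 * l - 1) (2 * r - 2 * l - 1) = Ico (2 * l - 1) (2 * r - 2 * l) := by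
    ext k
    simp only [mem_Icc, mem_Ico]
    omega
  rw [hIcc, sum_Ico_eq_sum_Ico_add_sum_Ico _ (b := r - l) (by omega) (by omega),
    sum_Ico_eq_sum_Ico_add_sum_Ico _ (a := r - l) (b := r + l - 1) (by omega) (by omega)]
  set I := Icc l (r - l - 1)
  have hanti {A : Finset ℤ} (hA : A ⊆ L ∪ R) (K : Finset ℤ) :
      ∑ k ∈ K, (#(sumAvoiding (L ∪ R) I k) : ℝ) ≤ ∑ k ∈ K, (#(sumAvoiding A I k) : ℝ) :=
    sum_le_sum fun k _ => mod_cast card_le_card (sumAvoiding_anti_left hA I k)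
  have hleft := (hanti subset_union_left _).trans (sum_card_sumAvoiding_left_le (r := r) hl hL)
  have hright := (hanti subset_union_right _).trans (sum_card_sumAvoiding_right_le hl hR)
  have hmiddle := sum_card_sumAvoiding_middle_le (r := r) hl (L ∪ R)
  linarith

lemma le_card_filter_Icc_subset_add (hl : 1 ≤ l) (hr : 3 * l ≤ r) (hL : L ⊆ Icc 0 (l - 1))
    (hR : R ⊆ Icc (r - l) (r - 1)) :
    (1 - 6 * ((2 : ℝ) ^ (-(#L : ℤ)) + 2 ^ (-(#R : ℤ))) -
        2 * l * (3 / 4) ^ ((r - 3 * l).toNat / 2)) * 2 ^ (r - 2 * l) ≤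
      #{M ∈ (Icc l (r - l - 1)).powerset |
        Icc (2 * l - 1) (2 * r - 2 * l - 1) ⊆ (L ∪ M ∪ R) + (L ∪ M ∪ R)} := by
  have hcard : (#(Icc l (r - l - 1)) : ℤ) = r - 2 * l := by
    rw [Int.card_Icc]
    omega
  have hunion := two_pow_card_le_card_add_sum_card_sumAvoiding (L ∪ R) (Icc l (r - l - 1))
    (Icc (2 * l - 1) (2 * r - 2 * l - 1))
  have hsum := sum_card_sumAvoiding_union_le hl hr hL hR
  simp only [union_right_comm L _ R]
  rw [← hcard, zpow_natCast]
  rify at hunion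
  linarith

end Int

theorem stmt16 (l : ℤ) (hl : 1 ≤ l) (L R₀ : Finset ℤ)
    (hL : L ⊆ Finset.Icc 0 (l - 1)) (hR₀ : R₀ ⊆ Finset.Icc 0 (l - 1))
    (ε : ℝ) (hε : 0 < ε) :
    ∃ r₀ : ℤ, ∀ r : ℤ, r₀ ≤ r →
      (1 - 6 * ((2 : ℝ) ^ (-(L.card : ℤ)) + (2 : ℝ) ^ (-(R₀.card : ℤ))) - ε)
          * (2 : ℝ) ^ (r - 2 * l) ≤
      (((Finset.Icc l (r - l - 1)).powerset.filter (fun M =>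
          Finset.Icc (2 * l - 1) (2 * r - 2 * l - 1) ⊆
            (L ∪ M ∪ R₀.image (fun x => (r - l) + x))
              + (L ∪ M ∪ R₀.image (fun x => (r - l) + x)))).card : ℝ) := by
  have hl₀ : (0 : ℝ) < 2 * l := by
    have : (0 : ℝ) < l := mod_cast hl
    positivity
  obtain ⟨N, hN⟩ := exists_pow_lt_of_lt_one (div_pos hε hl₀) (show (3 / 4 : ℝ) < 1 by norm_num)
  refine ⟨3 * l + 2 * N, fun r hr => ?_⟩
  have hR : R₀.image (fun x => (r - l) + x) ⊆ Icc (r - l) (r - 1) := by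
    refine image_subset_iff.2 fun x hx => ?_
    have := mem_Icc.1 (hR₀ hx)
    rw [mem_Icc]
    omega
  have herror : 2 * l * (3 / 4 : ℝ) ^ ((r - 3 * l).toNat / 2) ≤ ε :=
    calc 2 * l * (3 / 4 : ℝ) ^ ((r - 3 * l).toNat / 2) ≤ 2 * l * (3 / 4) ^ N := by
          gcongr 2 * l * ?_
          exact pow_le_pow_of_le_one (by norm_num) (by norm_num) (by omega)
      _ ≤ ε := ((lt_div_iff₀' hl₀).1 hN).le
  refine le_trans ?_ (le_card_filter_Icc_subset_add hl (by omega) hL hR)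
  rw [card_image_of_injective R₀ (add_right_injective (r - l))]
  gcongr
end
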